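/- arXiv:2503.19852 — 2 statements merged into one kernel-verified Lean document; each statement's English description precedes it below -/
import Mathlib

section
/- Let Ω ⊂ ℝⁿ be a bounded smooth convex domain and u a Dirichlet eigenfunction: Δu + λu = 0 in Ω, u = 0 on ∂Ω, normalized with ∫_Ω u² = 1. Then ∫_Ω |D²u|² ≤ λ². -/
open MeasureTheory Metric Set Filter
open scoped RealInnerProductSpace

/-- The Laplacian of `u : ℝⁿ → ℝ` at `x`. -/
noncomputable def lap {n : ℕ} (u : EuclideanSpace ℝ (Fin n) → ℝ)
    (x : EuclideanSpace ℝ (Fin n)) : ℝ :=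
  ∑ i : Fin n, fderiv ℝ (fun y => fderiv ℝ u y (EuclideanSpace.single i 1)) x
    (EuclideanSpace.single i 1)

/-- The squared Hilbert–Schmidt norm `|D²u|² = Σ_{i,j} (∂²_{ij} u)²` of the Hessian. -/
noncomputable def hessSq {n : ℕ} (u : EuclideanSpace ℝ (Fin n) → ℝ)
    (x : EuclideanSpace ℝ (Fin n)) : ℝ :=
  ∑ i : Fin n, ∑ j : Fin n,
    (fderiv ℝ (fun y => fderiv ℝ u y (EuclideanSpace.single i 1)) x
      (EuclideanSpace.single j 1)) ^ 2

/-- The tangential (boundary) gradient of `u` relative to the unit normal field `ν`. -/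
noncomputable def tgrad {n : ℕ} (u : EuclideanSpace ℝ (Fin n) → ℝ)
    (ν : EuclideanSpace ℝ (Fin n) → EuclideanSpace ℝ (Fin n))
    (x : EuclideanSpace ℝ (Fin n)) : EuclideanSpace ℝ (Fin n) :=
  gradient u x - ⟪gradient u x, ν x⟫ • ν x

/-- `Ω` has `C^∞` boundary: it is the sublevel set of a smooth defining function which
is regular on the boundary. -/
def HasSmoothBoundary {n : ℕ} (Ω : Set (EuclideanSpace ℝ (Fin n))) : Prop :=
  ∃ f : EuclideanSpace ℝ (Fin n) → ℝ, ContDiff ℝ (⊤ : ℕ∞) f ∧ Ω = {x | f x < 0} ∧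
    ∀ x ∈ frontier Ω, fderiv ℝ f x ≠ 0

/-! For `u` of class `C²` the function `(Δu)² - |D²u|²` is the weak divergence of Reilly's field
`Δu ∇u - D²u ∇u`, the third derivatives of `u` cancelling; so it suffices that the flux of this
field through the boundary is outward. At a boundary point, `u = 0` makes `∇u` a multiple `c • ℓ` of
any supporting functional `ℓ`, and convexity makes `c D²u` nonnegative on `ker ℓ`.

Boundary integrals and boundary regularity are avoided by testing the divergence against cutoffs
that depend on the distance to a shrunken copy of `Ω`: the differential of such a cutoff is, up to
sign, a supporting functional of `Ω` at a nearby boundary point. Hence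
`∫ |D²u|² ≤ ∫ (Δu)² = λ² ∫ u²`. -/

section

open scoped Topology Manifold Convolution

section WeakDivergence

variable {E : Type*} [NormedAddCommGroup E] [NormedSpace ℝ E] {U : Set E}

/-- `φ` is a `C¹` test function on `U`: its support is compact and contained in `U`. -/
structure IsTestFunctionOn (φ : E → ℝ) (U : Set E) : Prop where
  contDiff : ContDiff ℝ 1 φ
  hasCompactSupport : HasCompactSupport φ
  tsupport_subset : tsupport φ ⊆ U

namespace IsTestFunctionOn

variable {φ g : E → ℝ}

lemma eq_zero_of_notMem (hφ : IsTestFunctionOn φ U) {x : E} (hx : x ∉ U) : φ x = 0 :=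
  image_eq_zero_of_notMem_tsupport fun h => hx (hφ.tsupport_subset h)

lemma mem_of_fderiv_ne_zero (hφ : IsTestFunctionOn φ U) {x : E} (hx : fderiv ℝ φ x ≠ 0) : x ∈ U :=
  hφ.tsupport_subset (support_fderiv_subset ℝ hx)

lemma mul (hφ : IsTestFunctionOn φ U) (hU : IsOpen U) (hg : ContDiffOn ℝ 1 g U) :
    IsTestFunctionOn (fun x => φ x * g x) U where
  contDiff := contMDiff_iff_contDiff.1 <| contMDiff_of_tsupport fun _ hx =>
    (hφ.contDiff.contDiffAt.mul (hg.contDiffAt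
      (hU.mem_nhds (hφ.tsupport_subset (tsupport_mul_subset_left hx))))).contMDiffAt
  hasCompactSupport := hφ.hasCompactSupport.mul_right
  tsupport_subset := tsupport_mul_subset_left.trans hφ.tsupport_subset

variable [MeasurableSpace E] [BorelSpace E] {μ : Measure E} [IsFiniteMeasureOnCompacts μ]

lemma integrable_mul (hφ : IsTestFunctionOn φ U) (hU : IsOpen U) {m : E → ℝ}
    (hm : ContinuousOn m U) : Integrable (fun x => φ x * m x) μ :=
  ((hφ.contDiff.continuous.continuousOn.mul hm).continuous_of_tsupport_subset hU
    (tsupport_mul_subset_left.trans hφ.tsupport_subset)).integrable_of_hasCompactSupport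
    hφ.hasCompactSupport.mul_right

lemma integrable_fderiv_apply (hφ : IsTestFunctionOn φ U) (hU : IsOpen U) {V : E → E}
    (hV : ContinuousOn V U) : Integrable (fun x => fderiv ℝ φ x (V x)) μ := by
  have hsub : tsupport (fun x => fderiv ℝ φ x (V x)) ⊆ tsupport φ :=
    closure_minimal (fun x hx => support_fderiv_subset ℝ fun h => hx (by simp [h]))
      (isClosed_tsupport φ)
  have hcont : Continuous fun x => fderiv ℝ φ x (V x) :=
    ((hφ.contDiff.continuous_fderiv one_ne_zero).continuousOn.clm_apply
      hV).continuous_of_tsupport_subset hU (hsub.trans hφ.tsupport_subset)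
  exact hcont.integrable_of_hasCompactSupport
    (hφ.hasCompactSupport.of_isClosed_subset (isClosed_tsupport _) hsub)

end IsTestFunctionOn

variable [MeasurableSpace E]

/-- The continuous vector field `V` has the continuous function `m` as its distributional divergence
on `U`. Differentiability of `V` is not required. -/
structure HasWeakDivergenceOn (V : E → E) (m : E → ℝ) (U : Set E) (μ : Measure E) : Prop where
  continuousOn_field : ContinuousOn V U
  continuousOn_divergence : ContinuousOn m U
  integral_eq : ∀ φ, IsTestFunctionOn φ U → ∫ x, φ x * m x ∂μ = -∫ x, fderiv ℝ φ x (V x) ∂μ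

namespace HasWeakDivergenceOn

variable {V W : E → E} {m k : E → ℝ} {μ : Measure E}

lemma congr (h : HasWeakDivergenceOn V m U μ) (hV : EqOn W V U) (hm : EqOn k m U) :
    HasWeakDivergenceOn W k U μ where
  continuousOn_field := h.continuousOn_field.congr hV
  continuousOn_divergence := h.continuousOn_divergence.congr hm
  integral_eq φ hφ := by
    have hleft : ∀ x, φ x * k x = φ x * m x := fun x => by
      by_cases hx : x ∈ U
      · rw [hm hx]
      · simp only [hφ.eq_zero_of_notMem hx, zero_mul]
    have hright : ∀ x, fderiv ℝ φ x (W x) = fderiv ℝ φ x (V x) := fun x => by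
      by_cases hx : fderiv ℝ φ x = 0
      · simp only [hx, zero_apply]
      · rw [hV (hφ.mem_of_fderiv_ne_zero hx)]
    simpa only [hleft, hright] using h.integral_eq φ hφ

lemma const_smul (h : HasWeakDivergenceOn V m U μ) (c : ℝ) :
    HasWeakDivergenceOn (fun x => c • V x) (fun x => c * m x) U μ where
  continuousOn_field := h.continuousOn_field.const_smul c
  continuousOn_divergence := h.continuousOn_divergence.const_mul c
  integral_eq φ hφ := by
    simp only [mul_left_comm _ c, map_smul, smul_eq_mul, integral_const_mul, h.integral_eq φ hφ,
      mul_neg]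

variable [BorelSpace E]

lemma sum [IsFiniteMeasureOnCompacts μ] (hU : IsOpen U) {ι : Type*} (s : Finset ι)
    {V : ι → E → E} {m : ι → E → ℝ} (h : ∀ i ∈ s, HasWeakDivergenceOn (V i) (m i) U μ) :
    HasWeakDivergenceOn (fun x => ∑ i ∈ s, V i x) (fun x => ∑ i ∈ s, m i x) U μ where
  continuousOn_field := continuousOn_finsetSum s fun i hi => (h i hi).continuousOn_field
  continuousOn_divergence := continuousOn_finsetSum s fun i hi => (h i hi).continuousOn_divergence
  integral_eq φ hφ := by
    simp only [Finset.mul_sum, map_sum]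
    rw [integral_finsetSum _ fun i hi => hφ.integrable_mul hU (h i hi).continuousOn_divergence,
      integral_finsetSum _ fun i hi => hφ.integrable_fderiv_apply hU (h i hi).continuousOn_field,
      ← Finset.sum_neg_distrib]
    exact Finset.sum_congr rfl fun i hi => (h i hi).integral_eq φ hφ

lemma add [IsFiniteMeasureOnCompacts μ] (hU : IsOpen U) (hV : HasWeakDivergenceOn V m U μ)
    (hW : HasWeakDivergenceOn W k U μ) :
    HasWeakDivergenceOn (fun x => V x + W x) (fun x => m x + k x) U μ where
  continuousOn_field := hV.continuousOn_field.add hW.continuousOn_field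
  continuousOn_divergence := hV.continuousOn_divergence.add hW.continuousOn_divergence
  integral_eq φ hφ := by
    simp only [mul_add, map_add]
    rw [integral_add (hφ.integrable_mul hU hV.continuousOn_divergence)
        (hφ.integrable_mul hU hW.continuousOn_divergence),
      integral_add (hφ.integrable_fderiv_apply hU hV.continuousOn_field)
        (hφ.integrable_fderiv_apply hU hW.continuousOn_field),
      hV.integral_eq φ hφ, hW.integral_eq φ hφ, neg_add]

end HasWeakDivergenceOn

variable [BorelSpace E] [FiniteDimensional ℝ E] {μ : Measure E} [μ.IsAddHaarMeasure]

lemma hasWeakDivergenceOn_smul_const (hU : IsOpen U) {g : E → ℝ} (hg : ContDiffOn ℝ 1 g U) (v : E) :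
    HasWeakDivergenceOn (fun x => g x • v) (fun x => fderiv ℝ g x v) U μ where
  continuousOn_field := hg.continuousOn.smul continuousOn_const
  continuousOn_divergence :=
    (hg.continuousOn_fderiv_of_isOpen hU le_rfl).clm_apply continuousOn_const
  integral_eq φ hφ := by
    have hdg : ContinuousOn (fun x => fderiv ℝ g x v) U :=
      (hg.continuousOn_fderiv_of_isOpen hU le_rfl).clm_apply continuousOn_const
    have hφg : Integrable (fun x => fderiv ℝ φ x v * g x) μ := by
      simpa only [map_smul, smul_eq_mul, mul_comm] using
        hφ.integrable_fderiv_apply (μ := μ) hU (V := fun x => g x • v)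
          (hg.continuousOn.smul continuousOn_const)
    simpa only [map_smul, smul_eq_mul, mul_comm] using
      integral_mul_fderiv_eq_neg_fderiv_mul_of_integrable hφg (hφ.integrable_mul hU hdg)
        (hφ.integrable_mul hU hg.continuousOn)
        (fun x _ => hφ.contDiff.differentiable one_ne_zero x)
        (fun x hx => (hg.contDiffAt (hU.mem_nhds (hφ.tsupport_subset hx))).differentiableAt
          one_ne_zero)

lemma hasWeakDivergenceOn_sub_const (hU : IsOpen U) (z : E) :
    HasWeakDivergenceOn (fun x => x - z) (fun _ => (Module.finrank ℝ E : ℝ)) U μ := by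
  let b := Module.finBasis ℝ E
  let ℓ : Fin (Module.finrank ℝ E) → E →L[ℝ] ℝ := fun i => (b.coord i).toContinuousLinearMap
  have hℓ : ∀ i x, HasFDerivAt (fun x => ℓ i (x - z)) (ℓ i) x := fun i x =>
    (ℓ i).hasFDerivAt.comp x ((hasFDerivAt_id x).sub_const z)
  refine (HasWeakDivergenceOn.sum hU Finset.univ fun i _ =>
    hasWeakDivergenceOn_smul_const hU (g := fun x => ℓ i (x - z)) (by fun_prop) (b i)).congr
      (fun x _ => (b.sum_repr (x - z)).symm) fun x _ => ?_
  simp only [(hℓ _ x).fderiv]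
  simp [ℓ]

lemma fderiv_convolution_apply {f g : E → ℝ} (hf : Continuous f) (hg : ContDiff ℝ 1 g)
    (hgc : HasCompactSupport g) (x v : E) :
    fderiv ℝ (f ⋆[ContinuousLinearMap.mul ℝ ℝ, μ] g) x v
      = (f ⋆[ContinuousLinearMap.mul ℝ ℝ, μ] fun y => fderiv ℝ g y v) x := by
  rw [(hgc.hasFDerivAt_convolution_right _ hf.locallyIntegrable hg x).fderiv,
    convolution_precompR_apply _ hf.locallyIntegrable (hgc.fderiv ℝ)
      (hg.continuous_fderiv one_ne_zero)]

lemma convolution_mul_comm (f g : E → ℝ) :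
    f ⋆[ContinuousLinearMap.mul ℝ ℝ, μ] g = g ⋆[ContinuousLinearMap.mul ℝ ℝ, μ] f := by
  rw [← convolution_flip, ContinuousLinearMap.flip_mul]

/-- Both sides are the value at `0` of the second derivative along `v` and `w` of the convolution
of `a` with the reflection of `ψ`; this needs only one derivative of each factor. -/
lemma integral_fderiv_mul_fderiv_comm {a ψ : E → ℝ} (ha : ContDiff ℝ 1 a)
    (hac : HasCompactSupport a) (hψ : ContDiff ℝ 1 ψ) (hψc : HasCompactSupport ψ) (v w : E) :
    ∫ x, fderiv ℝ a x v * fderiv ℝ ψ x w ∂μ = ∫ x, fderiv ℝ a x w * fderiv ℝ ψ x v ∂μ := by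
  have hD : ∀ {g : E → ℝ}, ContDiff ℝ 1 g → ∀ v, Continuous fun x => fderiv ℝ g x v := fun hg v =>
    (hg.continuous_fderiv one_ne_zero).clm_apply continuous_const
  let c : E → ℝ := fun x => ψ (-x)
  have hc : ContDiff ℝ 1 c := hψ.comp contDiff_neg
  have hcc : HasCompactSupport c := hψc.comp_homeomorph (Homeomorph.neg E)
  have hfirst : (fun x => fderiv ℝ a x v) ⋆[ContinuousLinearMap.mul ℝ ℝ, μ] c
      = a ⋆[ContinuousLinearMap.mul ℝ ℝ, μ] fun x => fderiv ℝ c x v := by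
    funext x
    rw [convolution_mul_comm, ← fderiv_convolution_apply hc.continuous ha hac,
      convolution_mul_comm, fderiv_convolution_apply ha.continuous hc hcc]
  have hsecond := congrArg (fun f => fderiv ℝ f 0 w) hfirst
  rw [convolution_mul_comm a, fderiv_convolution_apply (hD ha v) hc hcc,
    fderiv_convolution_apply (hD hc v) ha hac, convolution_mul_comm (fun x => fderiv ℝ c x v)]
    at hsecond
  have hc' : ∀ x v, fderiv ℝ c (-x) v = -fderiv ℝ ψ x v := fun x v => by
    have h : HasFDerivAt c _ (-x) :=
      (hψ.differentiable one_ne_zero (-(-x))).hasFDerivAt.comp (-x) (hasFDerivAt_id (-x)).neg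
    simp [h.fderiv]
  simpa [convolution_def, hc', integral_neg] using hsecond

lemma IsTestFunctionOn.integral_fderiv_mul_fderiv_comm {p ψ : E → ℝ} (hψ : IsTestFunctionOn ψ U)
    (hU : IsOpen U) (hp : ContDiffOn ℝ 1 p U) (v w : E) :
    ∫ x, fderiv ℝ p x v * fderiv ℝ ψ x w ∂μ = ∫ x, fderiv ℝ p x w * fderiv ℝ ψ x v ∂μ := by
  obtain ⟨L, hL, hψL, hLU⟩ := exists_compact_between hψ.hasCompactSupport.isCompact hU
    hψ.tsupport_subset
  obtain ⟨θ, hθ1, hθ0, -⟩ := exists_contMDiffMap_one_nhds_of_subset_interior (n := 1) 𝓘(ℝ, E)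
    (isClosed_tsupport ψ) hψL
  have hθL : tsupport θ ⊆ L :=
    closure_minimal (fun x hx => by_contra fun h => hx (hθ0 x h)) hL.isClosed
  have hθ : IsTestFunctionOn θ U :=
    ⟨θ.contMDiff.contDiff, hL.of_isClosed_subset (isClosed_tsupport _) hθL, hθL.trans hLU⟩
  have hlocal : ∀ v w x, fderiv ℝ (fun x => θ x * p x) x v * fderiv ℝ ψ x w
      = fderiv ℝ p x v * fderiv ℝ ψ x w := fun v w x => by
    by_cases hx : x ∈ tsupport ψ
    · have heq : (fun x => θ x * p x) =ᶠ[𝓝 x] p := by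
        filter_upwards [Filter.Eventually.filter_mono (nhds_le_nhdsSet hx) hθ1] with y hy
        rw [hy, one_mul]
      rw [heq.fderiv_eq]
    · rw [Function.notMem_support.1 fun h => hx (support_fderiv_subset ℝ h)]
      simp only [zero_apply, mul_zero]
  simpa only [hlocal] using _root_.integral_fderiv_mul_fderiv_comm (μ := μ)
    (hθ.mul hU hp).contDiff (hθ.mul hU hp).hasCompactSupport hψ.contDiff hψ.hasCompactSupport v w

/-- The divergence is the Jacobian minor of `p` and `g`: the second derivatives of `p`, which need
not exist, cancel. -/
lemma hasWeakDivergenceOn_minor (hU : IsOpen U) {p g : E → ℝ} (hp : ContDiffOn ℝ 1 p U)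
    (hg : ContDiffOn ℝ 1 g U) (v w : E) :
    HasWeakDivergenceOn (fun x => g x • (fderiv ℝ p x v • w - fderiv ℝ p x w • v))
      (fun x => fderiv ℝ g x w * fderiv ℝ p x v - fderiv ℝ g x v * fderiv ℝ p x w) U μ where
  continuousOn_field := by
    have hdp := hp.continuousOn_fderiv_of_isOpen hU le_rfl
    have := hg.continuousOn
    fun_prop
  continuousOn_divergence := by
    have hdp := hp.continuousOn_fderiv_of_isOpen hU le_rfl
    have hdg := hg.continuousOn_fderiv_of_isOpen hU le_rfl
    fun_prop
  integral_eq φ hφ := by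
    have hdp := hp.continuousOn_fderiv_of_isOpen hU le_rfl
    have hdg := hg.continuousOn_fderiv_of_isOpen hU le_rfl
    have hgc := hg.continuousOn
    have hψ := hφ.mul hU hg
    have hψint : ∀ v w,
        Integrable (fun x => fderiv ℝ p x v * fderiv ℝ (fun y => φ y * g y) x w) μ :=
      fun v w => by
        simpa only [map_smul, smul_eq_mul] using
          hψ.integrable_fderiv_apply (μ := μ) hU (V := fun x => fderiv ℝ p x v • w) (by fun_prop)
    have hleibniz : ∀ x, φ x * (fderiv ℝ g x w * fderiv ℝ p x v - fderiv ℝ g x v * fderiv ℝ p x w)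
        + fderiv ℝ φ x (g x • (fderiv ℝ p x v • w - fderiv ℝ p x w • v))
        = fderiv ℝ p x v * fderiv ℝ (fun y => φ y * g y) x w
          - fderiv ℝ p x w * fderiv ℝ (fun y => φ y * g y) x v := fun x => by
      by_cases hx : x ∈ U
      · rw [fderiv_fun_mul (hφ.contDiff.differentiable one_ne_zero x)
          ((hg.contDiffAt (hU.mem_nhds hx)).differentiableAt one_ne_zero)]
        simp only [map_smul, map_sub, add_apply, smul_apply, smul_eq_mul]
        ring
      · rw [hφ.eq_zero_of_notMem hx, not_not.1 (mt hφ.mem_of_fderiv_ne_zero hx),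
          not_not.1 (mt hψ.mem_of_fderiv_ne_zero hx)]
        simp only [zero_apply, zero_mul, mul_zero, add_zero, sub_zero]
    rw [eq_neg_iff_add_eq_zero, ← integral_add (hφ.integrable_mul hU (by fun_prop))
      (hφ.integrable_fderiv_apply hU (by fun_prop)), integral_congr_ae (.of_forall hleibniz),
      integral_sub (hψint v w) (hψint w v), hψ.integral_fderiv_mul_fderiv_comm hU hp, sub_self]

end WeakDivergence

section SupportingFunctional

variable {E : Type*} [NormedAddCommGroup E] [NormedSpace ℝ E] {Ω : Set E} {ℓ : E →L[ℝ] ℝ}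
  {x₀ y z : E} {t : ℝ}

lemma apply_lt_of_isMaxOn (hΩ : IsOpen Ω) (hℓ : ℓ ≠ 0) (hmax : IsMaxOn ℓ Ω x₀) (hy : y ∈ Ω) :
    ℓ y < ℓ x₀ := by
  have hsub : ℓ '' Ω ⊆ Iic (ℓ x₀) := image_subset_iff.2 hmax
  simpa using interior_maximal hsub (ℓ.isOpenMap_of_ne_zero hℓ _ hΩ) (mem_image_of_mem ℓ hy)

lemma mem_frontier_of_isMaxOn (hΩ : IsOpen Ω) (hℓ : ℓ ≠ 0) (hy : y ∈ closure Ω)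
    (hmax : IsMaxOn ℓ Ω y) : y ∈ frontier Ω := by
  rw [hΩ.frontier_eq]
  exact ⟨hy, fun hyΩ => (apply_lt_of_isMaxOn hΩ hℓ hmax hyΩ).false⟩

lemma isMaxOn_of_isMaxOn_image_homothety (ht : 0 < t)
    (hmax : IsMaxOn ℓ (AffineMap.homothety z t '' Ω) (AffineMap.homothety z t y)) :
    IsMaxOn ℓ Ω y := fun w hw => by
  have h : ℓ (AffineMap.homothety z t w) ≤ ℓ (AffineMap.homothety z t y) :=
    hmax (mem_image_of_mem _ hw)
  simp only [AffineMap.homothety_eq_lineMap, AffineMap.lineMap_apply_module, map_add, map_smul,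
    smul_eq_mul] at h
  exact le_of_mul_le_mul_left (le_of_add_le_add_left h) ht

lemma homothety_mem_of_mem_closure (hΩ : IsOpen Ω) (hconv : Convex ℝ Ω) (hz : z ∈ Ω)
    (hy : y ∈ closure Ω) (ht : t ∈ Ico 0 1) : AffineMap.homothety z t y ∈ Ω := by
  rw [AffineMap.homothety_eq_lineMap, AffineMap.lineMap_apply_module, ← hΩ.interior_eq]
  exact hconv.combo_interior_closure_mem_interior (hΩ.interior_eq.symm ▸ hz) hy (sub_pos.2 ht.2)
    ht.1 (sub_add_cancel 1 t)

end SupportingFunctional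

section NearestPoint

variable {E : Type*} [NormedAddCommGroup E] [InnerProductSpace ℝ E] {K U Ω : Set E} {p : E → E}

/-- `p` sends every point to its nearest point in the convex set `K`, encoded by the obtuse angle
criterion. -/
structure IsNearestPointMap (p : E → E) (K : Set E) : Prop where
  mem : ∀ x, p x ∈ K
  inner_le_zero : ∀ x, ∀ w ∈ K, ⟪x - p x, w - p x⟫ ≤ 0

lemma exists_isNearestPointMap (hne : K.Nonempty) (hK : IsComplete K) (hconv : Convex ℝ K) :
    ∃ p, IsNearestPointMap p K := by
  choose p hp hmin using exists_norm_eq_iInf_of_complete_convex hne hK hconv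
  exact ⟨p, hp, fun x => (norm_eq_iInf_iff_real_inner_le_zero hconv (hp x)).1 (hmin x)⟩

namespace IsNearestPointMap

lemma apply_of_mem (hp : IsNearestPointMap p K) {x : E} (hx : x ∈ K) : p x = x := by
  have h := hp.inner_le_zero x x hx
  rw [real_inner_self_nonpos, sub_eq_zero] at h
  exact h.symm

lemma sq_norm_le_inner (hp : IsNearestPointMap p K) (x y : E) :
    ‖p x - p y‖ ^ 2 ≤ ⟪p x - p y, x - y⟫ := by
  have hx := hp.inner_le_zero x (p y) (hp.mem y)
  have hy := hp.inner_le_zero y (p x) (hp.mem x)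
  have hsum : ⟪p x - p y, x - y⟫ - ‖p x - p y‖ ^ 2
      = -⟪x - p x, p y - p x⟫ - ⟪y - p y, p x - p y⟫ := by
    simp only [← real_inner_self_eq_norm_sq, inner_sub_left, inner_sub_right, real_inner_comm]
    ring
  linarith

lemma lipschitzWith_one (hp : IsNearestPointMap p K) : LipschitzWith 1 p :=
  LipschitzWith.of_dist_le_mul fun x y => by
    rw [NNReal.coe_one, one_mul, dist_eq_norm, dist_eq_norm]
    have h := (hp.sq_norm_le_inner x y).trans (real_inner_le_norm _ _)
    by_contra! hlt
    nlinarith [norm_nonneg (x - y)]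

lemma sq_norm_sub_add_le (hp : IsNearestPointMap p K) (x y : E) :
    ‖x - p x‖ ^ 2 + 2 * ⟪x - p x, y - x⟫ ≤ ‖y - p y‖ ^ 2 := by
  have hx := hp.inner_le_zero x (p y) (hp.mem y)
  have hexp : ‖y - p y‖ ^ 2 - (‖x - p x‖ ^ 2 + 2 * ⟪x - p x, y - x⟫)
      = ‖(y - p y) - (x - p x)‖ ^ 2 - 2 * ⟪x - p x, p y - p x⟫ := by
    simp only [← real_inner_self_eq_norm_sq, inner_sub_left, inner_sub_right, real_inner_comm]
    ring
  nlinarith [sq_nonneg ‖(y - p y) - (x - p x)‖]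

lemma sq_norm_sub_le_add (hp : IsNearestPointMap p K) (x y : E) :
    ‖y - p y‖ ^ 2 ≤ ‖x - p x‖ ^ 2 + 2 * ⟪x - p x, y - x⟫ + ‖y - x‖ ^ 2 := by
  have hy := hp.inner_le_zero y (p x) (hp.mem x)
  have hexp : ‖x - p x‖ ^ 2 + 2 * ⟪x - p x, y - x⟫ + ‖y - x‖ ^ 2
      = ‖y - p y‖ ^ 2 - 2 * ⟪y - p y, p x - p y⟫ + ‖p x - p y‖ ^ 2 := by
    simp only [← real_inner_self_eq_norm_sq, inner_sub_left, inner_sub_right, real_inner_comm]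
    ring
  nlinarith [sq_nonneg ‖p x - p y‖]

lemma hasFDerivAt_sq_norm_sub (hp : IsNearestPointMap p K) (x : E) :
    HasFDerivAt (fun y => ‖y - p y‖ ^ 2) ((2 : ℝ) • innerSL ℝ (x - p x)) x := by
  have hremainder : HasFDerivAt (𝕜 := ℝ)
      (fun y => ‖y - p y‖ ^ 2 - (‖x - p x‖ ^ 2 + 2 * ⟪x - p x, y - x⟫)) 0 x := by
    refine (Asymptotics.IsBigO.of_bound 1 (.of_forall fun y => ?_)).hasFDerivAt one_lt_two
    rw [one_mul, Real.norm_of_nonneg (sub_nonneg.2 (hp.sq_norm_sub_add_le x y)), norm_pow,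
      norm_norm]
    linarith [hp.sq_norm_sub_le_add x y]
  have hlinear := (((innerSL ℝ (x - p x)).hasFDerivAt.comp x
    ((hasFDerivAt_id x).sub_const x)).const_mul (2 : ℝ)).const_add (‖x - p x‖ ^ 2)
  simpa [Function.comp_def, -map_sub] using hremainder.fun_add hlinear

lemma contDiff_sq_norm_sub (hp : IsNearestPointMap p K) :
    ContDiff ℝ 1 fun y => ‖y - p y‖ ^ 2 :=
  contDiff_one_iff_hasFDerivAt.2 ⟨fun x => (2 : ℝ) • innerSL ℝ (x - p x),
    ((innerSL ℝ).continuous.comp (continuous_id.sub hp.lipschitzWith_one.continuous)).const_smul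
      (2 : ℝ),
    hp.hasFDerivAt_sq_norm_sub⟩

lemma isMaxOn_inner_sub (hp : IsNearestPointMap p K) (x : E) :
    IsMaxOn (innerSL ℝ (x - p x)) K (p x) := fun w hw => by
  have h := hp.inner_le_zero x w hw
  rwa [inner_sub_right, sub_nonpos] at h

/-- A cutoff of the form `η(dist(x, K)²)`. -/
lemma exists_cutoff [FiniteDimensional ℝ E] (hK : IsCompact K) (hp : IsNearestPointMap p K)
    (hU : IsOpen U) (hKU : K ⊆ U) {ρ : ℝ} (hρ : 0 < ρ) :
    ∃ φ, IsTestFunctionOn φ U ∧ (∀ x, φ x ∈ Icc 0 1) ∧ EqOn φ 1 K ∧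
      ∀ x, fderiv ℝ φ x ≠ 0 → dist x (p x) ≤ ρ ∧ IsMaxOn (-fderiv ℝ φ x) K (p x) := by
  obtain ⟨δ, hδ, hδU⟩ := hK.exists_cthickening_subset_open hU hKU
  set r := min δ ρ
  have hr : 0 < r := lt_min hδ hρ
  let q : E → ℝ := fun x => 1 - (r ^ 2)⁻¹ * ‖x - p x‖ ^ 2
  have hq : ContDiff ℝ 1 q := contDiff_const.sub (contDiff_const.mul hp.contDiff_sq_norm_sub)
  have hnear : tsupport (fun x => Real.smoothTransition (q x)) ⊆ {x | dist x (p x) ≤ r} := by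
    refine closure_minimal (fun x hx => ?_)
      (isClosed_le (continuous_id.dist hp.lipschitzWith_one.continuous) continuous_const)
    contrapose! hx
    rw [mem_ofPred_eq, not_le, dist_eq_norm] at hx
    refine Function.notMem_support.2 (Real.smoothTransition.zero_of_nonpos (sub_nonpos.2 ?_))
    rw [one_le_inv_mul₀ (pow_pos hr 2)]
    gcongr
  have hthick : tsupport (fun x => Real.smoothTransition (q x)) ⊆ cthickening r K := fun x hx =>
    mem_cthickening_of_dist_le x (p x) r K (hp.mem x) (hnear hx)
  refine ⟨fun x => Real.smoothTransition (q x),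
    ⟨Real.smoothTransition.contDiff.comp hq, hK.cthickening.of_isClosed_subset
      (isClosed_tsupport _) hthick,
      hthick.trans ((cthickening_mono (min_le_left _ _) K).trans hδU)⟩,
    fun x => ⟨Real.smoothTransition.nonneg _, Real.smoothTransition.le_one _⟩,
    fun x hx => by simp [q, hp.apply_of_mem hx], fun x hx => ⟨?_, fun w hw => ?_⟩⟩
  · exact (hnear (support_fderiv_subset ℝ hx)).trans (min_le_right _ _)
  · have hfderiv : fderiv ℝ (fun x => Real.smoothTransition (q x)) x
        = deriv Real.smoothTransition (q x) • -((r ^ 2)⁻¹ • (2 : ℝ) • innerSL ℝ (x - p x)) :=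
      ((Real.smoothTransition.contDiff.differentiable (n := 1)
        one_ne_zero _).hasDerivAt.comp_hasFDerivAt x
        (((hp.hasFDerivAt_sq_norm_sub x).const_mul _).const_sub 1)).fderiv
    have hderiv : 0 ≤ deriv Real.smoothTransition (q x) :=
      Real.smoothTransition.monotone.deriv_nonneg
    have hmax : ⟪x - p x, w⟫ ≤ ⟪x - p x, p x⟫ := hp.isMaxOn_inner_sub x hw
    simp only [mem_ofPred_eq, hfderiv, smul_neg, neg_neg, smul_apply, innerSL_apply_apply,
      smul_eq_mul]
    gcongr

end IsNearestPointMap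

lemma exists_cutoff_isMaxOn [FiniteDimensional ℝ E] (hΩ : IsOpen Ω) (hconv : Convex ℝ Ω)
    (hbd : Bornology.IsBounded Ω) {z : E} (hz : z ∈ Ω) {t : ℝ} (ht : t ∈ Ioo 0 1) :
    ∃ φ, IsTestFunctionOn φ Ω ∧ (∀ x, φ x ∈ Icc 0 1) ∧
      (∀ y ∈ closure Ω, φ (AffineMap.homothety z t y) = 1) ∧
      ∀ x, fderiv ℝ φ x ≠ 0 → ∃ y ∈ frontier Ω,
        dist x y ≤ (1 - t) * (1 + diam (closure Ω)) ∧ IsMaxOn (-fderiv ℝ φ x) Ω y := by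
  set K := AffineMap.homothety z t '' closure Ω
  have hKc : IsCompact K := hbd.isCompact_closure.image (AffineMap.homothety_continuous z t)
  have hKconv : Convex ℝ K := hconv.closure.affine_image _
  obtain ⟨p, hp⟩ := exists_isNearestPointMap ⟨_, mem_image_of_mem _ (subset_closure hz)⟩
    hKc.isComplete hKconv
  obtain ⟨φ, hφ, hφI, hφ1, hφn⟩ := hp.exists_cutoff hKc hΩ
    (image_subset_iff.2 fun y hy => homothety_mem_of_mem_closure hΩ hconv hz hy ⟨ht.1.le, ht.2⟩)
    (sub_pos.2 ht.2)
  refine ⟨φ, hφ, hφI, fun y hy => hφ1 (mem_image_of_mem _ hy), fun x hx => ?_⟩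
  obtain ⟨hdist, hmax⟩ := hφn x hx
  obtain ⟨y, hy, hpy⟩ := hp.mem x
  have hmaxΩ : IsMaxOn (-fderiv ℝ φ x) (closure Ω) y :=
    isMaxOn_of_isMaxOn_image_homothety ht.1 (hpy.symm ▸ hmax)
  have hmaxΩ' := hmaxΩ.on_subset subset_closure
  refine ⟨y, mem_frontier_of_isMaxOn hΩ (neg_ne_zero.2 hx) hy hmaxΩ', ?_, hmaxΩ'⟩
  have hzy : dist z y ≤ diam (closure Ω) := dist_le_diam_of_mem hbd.closure (subset_closure hz) hy
  calc dist x y ≤ dist x (p x) + dist (AffineMap.homothety z t y) y := by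
        rw [← hpy]; exact dist_triangle _ _ _
    _ ≤ (1 - t) + (1 - t) * diam (closure Ω) := by
        rw [dist_homothety_self, Real.norm_of_nonneg (sub_nonneg.2 ht.2.le)]
        gcongr
        exact sub_nonneg.2 ht.2.le
    _ = (1 - t) * (1 + diam (closure Ω)) := by ring

lemma exists_seq_cutoff_isMaxOn [FiniteDimensional ℝ E] (hΩ : IsOpen Ω) (hconv : Convex ℝ Ω)
    (hbd : Bornology.IsBounded Ω) (hne : Ω.Nonempty) :
    ∃ φ : ℕ → E → ℝ, (∀ k, IsTestFunctionOn (φ k) Ω) ∧ (∀ k x, φ k x ∈ Icc 0 1) ∧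
      (∀ x ∈ Ω, Tendsto (φ · x) atTop (𝓝 1)) ∧
      ∀ δ > 0, ∀ᶠ k in atTop, ∀ x, fderiv ℝ (φ k) x ≠ 0 → ∃ y ∈ frontier Ω,
        dist x y < δ ∧ IsMaxOn (-fderiv ℝ (φ k) x) Ω y := by
  obtain ⟨z, hz⟩ := hne
  obtain ⟨t, -, ht, hlim⟩ := exists_seq_strictMono_tendsto' (zero_lt_one' ℝ)
  choose φ hφ hφI hφ1 hφn using fun k => exists_cutoff_isMaxOn hΩ hconv hbd hz (ht k)
  refine ⟨φ, hφ, hφI, fun x hx => tendsto_const_nhds.congr' ?_, fun δ hδ => ?_⟩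
  · have hinv : Tendsto (fun k => (t k)⁻¹) atTop (𝓝 1) := by
      simpa only [inv_one] using hlim.inv₀ one_ne_zero
    filter_upwards [hinv.eventually (eventually_homothety_mem_of_mem_interior ℝ z
      (hΩ.interior_eq.symm ▸ hx))] with k hk
    rw [← hφ1 k _ (subset_closure hk), ← AffineMap.homothety_mul_apply,
      mul_inv_cancel₀ (ht k).1.ne', AffineMap.homothety_one, AffineMap.id_apply]
  · have hzero : Tendsto (fun k => (1 - t k) * (1 + diam (closure Ω))) atTop (𝓝 0) := by
      simpa using (hlim.const_sub 1).mul_const (1 + diam (closure Ω))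
    filter_upwards [hzero.eventually_lt_const hδ] with k hk x hx
    obtain ⟨y, hy, hdist, hmax⟩ := hφn k x hx
    exact ⟨y, hy, hdist.trans_lt hk, hmax⟩

lemma mul_norm_le_of_isMaxOn {ℓ : E →L[ℝ] ℝ} {y z : E} {r : ℝ} (hr : 0 < r)
    (hball : closedBall z r ⊆ Ω) (hmax : IsMaxOn ℓ Ω y) : r * ‖ℓ‖ ≤ ℓ (y - z) := by
  have hle : ∀ v ∈ closedBall (0 : E) r, ℓ v ≤ ℓ (y - z) := fun v hv => by
    have h : ℓ (z + v) ≤ ℓ y := hmax (hball (by simpa using hv))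
    rw [map_add] at h
    rw [map_sub]
    linarith
  have hbound : ‖ℓ‖ ≤ ℓ (y - z) / r :=
    ContinuousLinearMap.opNorm_bound_of_ball_bound hr (ℓ (y - z)) ℓ fun v hv => abs_le.2 ⟨by
      have h := hle (-v) (by simpa using hv)
      rw [map_neg] at h
      linarith, hle v hv⟩
  rwa [le_div_iff₀' hr] at hbound

section Divergence

variable [FiniteDimensional ℝ E] [MeasurableSpace E] [BorelSpace E] {μ : Measure E}
  {V : E → E} {m : E → ℝ}

lemma HasWeakDivergenceOn.integral_nonneg_of_outward (hdiv : HasWeakDivergenceOn V m Ω μ)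
    (hΩ : IsOpen Ω) (hconv : Convex ℝ Ω) (hbd : Bornology.IsBounded Ω) (hne : Ω.Nonempty)
    (hV : ContinuousOn V (closure Ω)) (hm : IntegrableOn m Ω μ) {c : ℝ} (hc : 0 < c)
    (hout : ∀ y ∈ frontier Ω, ∀ ℓ : E →L[ℝ] ℝ, IsMaxOn ℓ Ω y → c * ‖ℓ‖ ≤ ℓ (V y)) :
    0 ≤ ∫ x in Ω, m x ∂μ := by
  obtain ⟨φ, hφ, hφI, hφlim, hφn⟩ := exists_seq_cutoff_isMaxOn hΩ hconv hbd hne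
  obtain ⟨δ, hδ, hVδ⟩ := Metric.uniformContinuousOn_iff.1
    (hbd.isCompact_closure.uniformContinuousOn_of_continuous hV) c hc
  have hcut : ∀ᶠ k in atTop, 0 ≤ ∫ x in Ω, φ k x * m x ∂μ := by
    filter_upwards [hφn δ hδ] with k hk
    rw [setIntegral_eq_integral_of_forall_compl_eq_zero fun x hx => by
        rw [(hφ k).eq_zero_of_notMem hx, zero_mul],
      hdiv.integral_eq _ (hφ k), ← integral_neg]
    refine integral_nonneg fun x => ?_
    by_cases hx : fderiv ℝ (φ k) x = 0
    · simp [hx]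
    obtain ⟨y, hy, hxy, hmax⟩ := hk x hx
    have hclose := hVδ x (subset_closure ((hφ k).mem_of_fderiv_ne_zero hx)) y
      (frontier_subset_closure hy) hxy
    rw [dist_eq_norm'] at hclose
    set ℓ := -fderiv ℝ (φ k) x
    calc (0 : ℝ) ≤ c * ‖ℓ‖ - ‖ℓ‖ * ‖V y - V x‖ := by
          rw [mul_comm c, ← mul_sub]
          exact mul_nonneg (norm_nonneg _) (sub_nonneg.2 hclose.le)
      _ ≤ ℓ (V y) - ℓ (V y - V x) :=
          sub_le_sub (hout y hy ℓ hmax) ((le_abs_self _).trans (ℓ.le_opNorm _))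
      _ = -fderiv ℝ (φ k) x (V x) := by rw [map_sub, sub_sub_cancel]; rfl
  have hlim : Tendsto (fun k => ∫ x in Ω, φ k x * m x ∂μ) atTop (𝓝 (∫ x in Ω, m x ∂μ)) := by
    refine tendsto_integral_of_dominated_convergence (fun x => ‖m x‖) (fun k => ?_) hm.norm
      (fun k => .of_forall fun x => ?_) ?_
    · exact (hφ k).contDiff.continuous.aestronglyMeasurable.mul hm.aestronglyMeasurable
    · rw [norm_mul, Real.norm_of_nonneg (hφI k x).1]
      exact mul_le_of_le_one_left (norm_nonneg _) (hφI k x).2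
    · refine (ae_restrict_mem hΩ.measurableSet).mono fun x hx => ?_
      simpa only [one_mul] using (hφlim x hx).mul_const (m x)
  exact ge_of_tendsto hlim hcut

/-- Adding a small multiple of the radial field `x ↦ x - z` makes the flux strictly outward. -/
lemma HasWeakDivergenceOn.integral_nonneg [μ.IsAddHaarMeasure] (hdiv : HasWeakDivergenceOn V m Ω μ)
    (hΩ : IsOpen Ω) (hconv : Convex ℝ Ω) (hbd : Bornology.IsBounded Ω)
    (hV : ContinuousOn V (closure Ω)) (hm : IntegrableOn m Ω μ)
    (hout : ∀ y ∈ frontier Ω, ∀ ℓ : E →L[ℝ] ℝ, IsMaxOn ℓ Ω y → 0 ≤ ℓ (V y)) :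
    0 ≤ ∫ x in Ω, m x ∂μ := by
  obtain rfl | ⟨z, hz⟩ := Ω.eq_empty_or_nonempty
  · simp
  obtain ⟨r, hr, hball⟩ := Metric.nhds_basis_closedBall.mem_iff.1 (hΩ.mem_nhds hz)
  have hperturbed : ∀ δ > 0,
      0 ≤ (∫ x in Ω, m x ∂μ) + δ * ∫ _ in Ω, (Module.finrank ℝ E : ℝ) ∂μ := fun δ hδ => by
    rw [← integral_const_mul, ← integral_add hm (integrableOn_const hbd.measure_lt_top.ne)]
    refine (hdiv.add hΩ
      ((hasWeakDivergenceOn_sub_const hΩ z).const_smul δ)).integral_nonneg_of_outward hΩ hconv hbd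
      ⟨z, hz⟩ (by fun_prop) (hm.add (integrableOn_const hbd.measure_lt_top.ne))
      (mul_pos hδ hr) fun y hy ℓ hmax => ?_
    have h := mul_le_mul_of_nonneg_left (mul_norm_le_of_isMaxOn hr hball hmax) hδ.le
    rw [map_add, map_smul, smul_eq_mul]
    linarith [hout y hy ℓ hmax]
  have hlim : Tendsto (fun δ => (∫ x in Ω, m x ∂μ) + δ * ∫ _ in Ω, (Module.finrank ℝ E : ℝ) ∂μ)
      (𝓝[>] 0) (𝓝 ((∫ x in Ω, m x ∂μ) + 0 * ∫ _ in Ω, (Module.finrank ℝ E : ℝ) ∂μ)) :=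
    (Continuous.tendsto (by fun_prop) 0).mono_left nhdsWithin_le_nhds
  rw [zero_mul, add_zero] at hlim
  exact ge_of_tendsto hlim (eventually_nhdsWithin_of_forall hperturbed)

end Divergence

end NearestPoint

section Taylor

variable {E F : Type*} [NormedAddCommGroup E] [NormedSpace ℝ E] [NormedAddCommGroup F]
  [NormedSpace ℝ F] {K : Set E} {u : E → F} {P : E → E →L[ℝ] F} {Q : E →L[ℝ] E →L[ℝ] F} {x₀ : E}

lemma hasFDerivAt_quadratic (hsymm : ∀ v w, Q v w = Q w v) (x : E) :
    HasFDerivAt (fun y => (1 / 2 : ℝ) • Q (y - x₀) (y - x₀)) (Q (x - x₀)) x := by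
  have hid : HasFDerivAt (fun y : E => y - x₀) (ContinuousLinearMap.id ℝ E) x :=
    (hasFDerivAt_id x).sub_const x₀
  refine (((Q.hasFDerivAt.comp x hid).clm_apply hid).const_smul (1 / 2 : ℝ)).congr_fderiv ?_
  ext v
  simp [hsymm v, ← two_smul ℝ]

/-- The mean value inequality for the Taylor remainder, whose derivative is the remainder of `P`. -/
lemma isLittleO_taylor_two_within (hK : Convex ℝ K) (hx₀ : x₀ ∈ K)
    (hP : ∀ x ∈ K, HasFDerivWithinAt u (P x) K x) (hQ : HasFDerivWithinAt P Q K x₀)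
    (hsymm : ∀ v w, Q v w = Q w v) :
    (fun y => u y - u x₀ - P x₀ (y - x₀) - (1 / 2 : ℝ) • Q (y - x₀) (y - x₀))
      =o[𝓝[K] x₀] fun y => ‖y - x₀‖ ^ 2 := by
  let G : E → F := fun y => u y - P x₀ (y - x₀) - (1 / 2 : ℝ) • Q (y - x₀) (y - x₀)
  have hG : ∀ x ∈ K, HasFDerivWithinAt G (P x - P x₀ - Q (x - x₀)) K x := fun x hx =>
    ((hP x hx).sub ((P x₀).hasFDerivAt.comp x
      ((hasFDerivAt_id x).sub_const x₀)).hasFDerivWithinAt).sub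
      (hasFDerivAt_quadratic hsymm x).hasFDerivWithinAt
  refine Asymptotics.isLittleO_iff.2 fun ε hε => ?_
  obtain ⟨δ, hδ, hPδ⟩ := Metric.mem_nhdsWithin_iff.1 (hQ.isLittleO.def hε)
  filter_upwards [inter_mem_nhdsWithin K (ball_mem_nhds x₀ hδ)] with y ⟨hyK, hyδ⟩
  have hbound : ∀ x ∈ K ∩ closedBall x₀ ‖y - x₀‖, ‖P x - P x₀ - Q (x - x₀)‖ ≤ ε * ‖y - x₀‖ := by
    rintro x ⟨hxK, hxy⟩
    have hxδ : x ∈ ball x₀ δ := (mem_closedBall.1 hxy).trans_lt (by rwa [← dist_eq_norm])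
    refine (hPδ ⟨hxδ, hxK⟩).trans ?_
    rw [mem_closedBall, dist_eq_norm] at hxy
    gcongr
  have hmvt := (hK.inter (convex_closedBall x₀ _)).norm_image_sub_le_of_norm_hasFDerivWithin_le
    (fun x hx => (hG x hx.1).mono inter_subset_left) hbound
    ⟨hx₀, mem_closedBall_self (norm_nonneg _)⟩ ⟨hyK, (dist_eq_norm y x₀).le⟩
  calc _ = ‖G y - G x₀‖ := by
        congr 1
        simp only [G, sub_self, map_zero, smul_zero, sub_zero]
        abel
    _ ≤ ε * ‖‖y - x₀‖ ^ 2‖ := by rwa [norm_pow, norm_norm, sq, ← mul_assoc]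

lemma tendsto_inv_smul_of_apply_eq (hK : Convex ℝ K) (hx₀ : x₀ ∈ K)
    (hP : ∀ x ∈ K, HasFDerivWithinAt u (P x) K x) (hQ : HasFDerivWithinAt P Q K x₀)
    (hsymm : ∀ v w, Q v w = Q w v) {ι : Type*} {l : Filter ι} {t : ι → ℝ} {v : ι → E} {τ : E}
    (ht : Tendsto t l (𝓝[≠] 0)) (hv : Tendsto v l (𝓝 τ)) (hmem : ∀ᶠ k in l, x₀ + t k • v k ∈ K)
    (hu : ∀ᶠ k in l, u (x₀ + t k • v k) = u x₀) :
    Tendsto (fun k => (t k)⁻¹ • P x₀ (v k)) l (𝓝 (-(1 / 2 : ℝ) • Q τ τ)) := by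
  obtain ⟨ht₀, htne⟩ := tendsto_nhdsWithin_iff.1 ht
  have hx : Tendsto (fun k => x₀ + t k • v k) l (𝓝[K] x₀) :=
    tendsto_nhdsWithin_iff.2 ⟨by simpa using (ht₀.smul hv).const_add x₀, hmem⟩
  have hsq : (fun k => ‖x₀ + t k • v k - x₀‖ ^ 2) =O[l] fun k => t k ^ 2 := by
    simpa using (((Asymptotics.isBigO_refl t l).smul (hv.isBigO_one ℝ)).norm_left).pow 2
  have hrem := (((isLittleO_taylor_two_within hK hx₀ hP hQ hsymm).comp_tendsto hx).trans_isBigO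
    hsq).tendsto_inv_smul_nhds_zero
  have hquad : Tendsto (fun k => -(1 / 2 : ℝ) • Q (v k) (v k)) l (𝓝 (-(1 / 2 : ℝ) • Q τ τ)) := by
    have hQ' : Continuous fun w => -(1 / 2 : ℝ) • Q w w := by fun_prop
    exact (hQ'.tendsto τ).comp hv
  have hlim := hquad.sub hrem
  rw [sub_zero] at hlim
  refine hlim.congr' ?_
  filter_upwards [hu, htne] with k hk (htk : t k ≠ 0)
  simp only [Function.comp_apply, hk, add_sub_cancel_left, sub_self, zero_sub, map_smul,
    smul_apply, smul_sub, smul_neg, neg_smul, smul_smul]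
  match_scalars <;> field_simp
  ring

end Taylor

section FrontierDerivatives

variable {E F : Type*} [NormedAddCommGroup E] [NormedSpace ℝ E] [NormedAddCommGroup F]
  [NormedSpace ℝ F] {Ω : Set E} {x₀ a w τ : E} {ℓ : E →L[ℝ] ℝ} {c t : ℝ}

lemma exists_mem_segment_add_smul_mem_frontier (ha : x₀ + t • a ∈ Ω) (hw : x₀ + t • w ∉ Ω) :
    ∃ v ∈ segment ℝ w a, x₀ + t • v ∈ frontier Ω := by
  have : PreconnectedSpace (segment ℝ w a) :=
    isPreconnected_iff_preconnectedSpace.1 (convex_segment w a).isPreconnected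
  let g : segment ℝ w a → E := fun v => x₀ + t • (v : E)
  have hg : Continuous g := by fun_prop
  obtain ⟨⟨v, hv⟩, hfr⟩ : (frontier (g ⁻¹' Ω)).Nonempty := nonempty_frontier_iff.2
    ⟨⟨⟨a, right_mem_segment ℝ w a⟩, ha⟩,
      (ne_univ_iff_exists_notMem _).2 ⟨⟨w, left_mem_segment ℝ w a⟩, hw⟩⟩
  exact ⟨v, hv, hg.frontier_preimage_subset Ω hfr⟩

lemma add_smul_mem_of_mem_Ioc (hΩ : IsOpen Ω) (hconv : Convex ℝ Ω) (hx₀ : x₀ ∈ closure Ω)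
    {s : ℝ} (ha : x₀ + s • a ∈ Ω) (ht : t ∈ Ioc 0 s) : x₀ + t • a ∈ Ω := by
  have hs : 0 < s := ht.1.trans_le ht.2
  have h := hconv.add_smul_mem_interior' hx₀ (by rwa [hΩ.interior_eq])
    (t := t / s) ⟨div_pos ht.1 hs, (div_le_one hs).2 ht.2⟩
  rwa [smul_smul, div_mul_cancel₀ t hs.ne', hΩ.interior_eq] at h

lemma exists_mem_segment_apply_eq_zero {u : E → F} {P : E →L[ℝ] F} (hΩ : IsOpen Ω)
    (hconv : Convex ℝ Ω) (hx₀ : x₀ ∈ frontier Ω) (hP : HasFDerivWithinAt u P (closure Ω) x₀)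
    (hu : ∀ x ∈ frontier Ω, u x = 0) (ha : x₀ + a ∈ Ω) (hw : ∀ s > (0 : ℝ), x₀ + s • w ∉ Ω) :
    ∃ v ∈ segment ℝ w a, P v = 0 := by
  let t : ℕ → ℝ := fun k => 1 / (k + 1)
  have ht : ∀ k, 0 < t k := fun k => Nat.one_div_pos_of_nat
  have ht₀ : Tendsto t atTop (𝓝 0) := tendsto_one_div_add_atTop_nhds_zero_nat
  have hcross : ∀ k, ∃ v ∈ segment ℝ w a, x₀ + t k • v ∈ frontier Ω := fun k =>
    exists_mem_segment_add_smul_mem_frontier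
      (add_smul_mem_of_mem_Ioc hΩ hconv hx₀.1 (s := 1) (by rwa [one_smul])
        ⟨ht k, (div_le_one (by positivity)).2 (by linarith [k.cast_nonneg (α := ℝ)])⟩)
      (hw (t k) (ht k))
  choose v hv hvf using hcross
  have hcompact : IsCompact (segment ℝ w a) := by
    rw [← convexHull_pair]
    exact (toFinite _).isCompact_convexHull ℝ
  obtain ⟨v₀, hv₀, φ, hφ, hvφ⟩ := hcompact.tendsto_subseq hv
  have htφ : Tendsto (fun k => t (φ k)) atTop (𝓝 0) := ht₀.comp hφ.tendsto_atTop
  have hslope := hP.lim (c := fun k => (t (φ k))⁻¹) (d := fun k => t (φ k) • v (φ k))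
    (by simpa using htφ.smul hvφ) (.of_forall fun k => (hvf (φ k)).1)
    (by simpa only [inv_smul_smul₀ (ht _).ne'] using! hvφ)
  simp only [hu _ (hvf _), hu x₀ hx₀, sub_self, smul_zero] at hslope
  exact ⟨v₀, hv₀, tendsto_nhds_unique hslope tendsto_const_nhds⟩

variable {u : E → ℝ}

lemma exists_pos_add_smul_mem {P : E →L[ℝ] ℝ} (hΩ : IsOpen Ω) (hconv : Convex ℝ Ω)
    (hx₀ : x₀ ∈ frontier Ω) (hP : HasFDerivWithinAt u P (closure Ω) x₀)
    (hu : ∀ x ∈ frontier Ω, u x = 0) (ha : x₀ + a ∈ Ω) (hw : 0 < P w * P a) :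
    ∃ s > (0 : ℝ), x₀ + s • w ∈ Ω := by
  by_contra! hout
  obtain ⟨_, ⟨α, β, hα, hβ, hαβ, rfl⟩, hzero⟩ :=
    exists_mem_segment_apply_eq_zero hΩ hconv hx₀ hP hu ha hout
  have hPa : 0 < P a ^ 2 := by
    have : P a ≠ 0 := right_ne_zero_of_mul hw.ne'
    positivity
  have hcomb : α * (P w * P a) + β * P a ^ 2 = 0 := by
    simp only [map_add, map_smul, smul_eq_mul] at hzero
    linear_combination P a * hzero
  exact (convex_Ioi (0 : ℝ) hw hPa hα hβ hαβ).ne' hcomb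

lemma exists_add_mem_apply_ne_zero {P : E →L[ℝ] ℝ} (hΩ : IsOpen Ω) (hne : Ω.Nonempty)
    (hP : P ≠ 0) (x₀ : E) : ∃ a, x₀ + a ∈ Ω ∧ P a ≠ 0 := by
  obtain ⟨y, hy⟩ := hne
  have hopen : IsOpen ((fun a => x₀ + a) ⁻¹' Ω) := hΩ.preimage (by fun_prop)
  obtain ⟨_, hPa, a, ha, rfl⟩ := (dense_compl_singleton (0 : ℝ)).exists_mem_open
    (P.isOpenMap_of_ne_zero hP _ hopen) ⟨_, y - x₀, by simpa, rfl⟩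
  exact ⟨a, ha, hPa⟩

theorem exists_eq_smul_of_isMaxOn {P : E →L[ℝ] ℝ} (hΩ : IsOpen Ω) (hconv : Convex ℝ Ω)
    (hx₀ : x₀ ∈ frontier Ω) (hP : HasFDerivWithinAt u P (closure Ω) x₀)
    (hu : ∀ x ∈ frontier Ω, u x = 0) (hℓ : ℓ ≠ 0) (hmax : IsMaxOn ℓ Ω x₀) :
    ∃ c : ℝ, P = c • ℓ := by
  rcases eq_or_ne P 0 with rfl | hP₀
  · exact ⟨0, (zero_smul ℝ ℓ).symm⟩
  obtain ⟨a, ha, hPa⟩ := exists_add_mem_apply_ne_zero hΩ (closure_nonempty_iff.1 ⟨x₀, hx₀.1⟩) hP₀ x₀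
  have hneg : ∀ w, 0 < P w * P a → ℓ w < 0 := fun w hw => by
    obtain ⟨s, hs, hmem⟩ := exists_pos_add_smul_mem hΩ hconv hx₀ hP hu ha hw
    have hlt := apply_lt_of_isMaxOn hΩ hℓ hmax hmem
    simp only [map_add, map_smul, smul_eq_mul] at hlt
    exact neg_of_mul_neg_right (by linarith) hs.le
  have hker : ∀ w, P w = 0 → ℓ w = 0 := fun w hw => by
    by_contra hℓw
    have h := hneg (a - (ℓ a / ℓ w) • w) (by simpa [hw] using mul_self_pos.2 hPa)
    simp [hℓw] at h
  have hℓa : ℓ a ≠ 0 := (hneg a (mul_self_pos.2 hPa)).ne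
  refine ⟨P a / ℓ a, ContinuousLinearMap.ext fun v => ?_⟩
  have h := hker (v - (P v / P a) • a) (by simp [hPa])
  simp only [map_sub, map_smul, smul_eq_mul, sub_eq_zero] at h
  simp only [smul_apply, smul_eq_mul, h]
  field_simp

lemma exists_add_smul_mem_frontier {P : E →L[ℝ] ℝ} (hΩ : IsOpen Ω) (hconv : Convex ℝ Ω)
    (hx₀ : x₀ ∈ frontier Ω) (hP : HasFDerivWithinAt u P (closure Ω) x₀)
    (hu : ∀ x ∈ frontier Ω, u x = 0) (hℓ : ℓ ≠ 0) (hmax : IsMaxOn ℓ Ω x₀) (hc : c ≠ 0)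
    (hPℓ : P = c • ℓ) (hτ : ℓ τ = 0) (ha : x₀ + a ∈ Ω) {r : ℝ} (hr : 0 < r) :
    ∃ t ∈ Ioc 0 r, ∃ ρ ∈ Icc 0 r, x₀ + t • (τ + ρ • a) ∈ frontier Ω := by
  have hℓa : ℓ a ≠ 0 := by simpa using (apply_lt_of_isMaxOn hΩ hℓ hmax ha).ne
  have hτa : 0 < P (τ + r • a) * P a := by
    have : P (τ + r • a) * P a = r * (c * ℓ a) ^ 2 := by
      simp only [hPℓ, map_add, map_smul, smul_apply, smul_eq_mul, hτ]
      ring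
    rw [this]
    positivity
  obtain ⟨s, hs, hmem⟩ := exists_pos_add_smul_mem hΩ hconv hx₀ hP hu ha hτa
  have hout : x₀ + min s r • τ ∉ Ω := fun h => by
    simpa [hτ] using apply_lt_of_isMaxOn hΩ hℓ hmax h
  obtain ⟨_, ⟨α, β, hα, hβ, hαβ, rfl⟩, hfr⟩ := exists_mem_segment_add_smul_mem_frontier
    (add_smul_mem_of_mem_Ioc hΩ hconv hx₀.1 hmem ⟨lt_min hs hr, min_le_left s r⟩) hout
  refine ⟨min s r, ⟨lt_min hs hr, min_le_right s r⟩, β * r,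
    ⟨by positivity, mul_le_of_le_one_left hr.le (by linarith)⟩, ?_⟩
  rwa [smul_add β, ← add_assoc, ← add_smul, hαβ, one_smul, smul_smul] at hfr

/-- `u` vanishes along frontier points `x₀ + t • (τ + ρ • a)` with `t, ρ → 0`, where `a` points
inwards: the second order expansion of `u` there compares `Q τ τ` with `ρ * ℓ a / t ≤ 0`. -/
theorem mul_apply_nonneg_of_apply_eq_zero {P : E → E →L[ℝ] ℝ} {Q : E →L[ℝ] E →L[ℝ] ℝ}
    (hΩ : IsOpen Ω) (hconv : Convex ℝ Ω) (hx₀ : x₀ ∈ frontier Ω)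
    (hP : ∀ x ∈ closure Ω, HasFDerivWithinAt u (P x) (closure Ω) x)
    (hQ : HasFDerivWithinAt P Q (closure Ω) x₀) (hsymm : ∀ v w, Q v w = Q w v)
    (hu : ∀ x ∈ frontier Ω, u x = 0) (hℓ : ℓ ≠ 0) (hmax : IsMaxOn ℓ Ω x₀)
    (hPℓ : P x₀ = c • ℓ) (hτ : ℓ τ = 0) : 0 ≤ c * Q τ τ := by
  rcases eq_or_ne c 0 with rfl | hc
  · rw [zero_mul]
  obtain ⟨y, hy⟩ := closure_nonempty_iff.1 ⟨x₀, hx₀.1⟩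
  have ha : x₀ + (y - x₀) ∈ Ω := by rwa [add_sub_cancel]
  have hℓa : ℓ (y - x₀) < 0 := by simpa using apply_lt_of_isMaxOn hΩ hℓ hmax hy
  choose t ht ρ hρ hfr using fun k : ℕ => exists_add_smul_mem_frontier hΩ hconv hx₀
    (hP x₀ hx₀.1) hu hℓ hmax hc hPℓ hτ ha (Nat.one_div_pos_of_nat (n := k) (α := ℝ))
  have hr := tendsto_one_div_add_atTop_nhds_zero_nat (𝕜 := ℝ)
  have htlim : Tendsto t atTop (𝓝[≠] 0) := tendsto_nhdsWithin_iff.2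
    ⟨squeeze_zero (fun k => (ht k).1.le) (fun k => (ht k).2) hr, .of_forall fun k => (ht k).1.ne'⟩
  have hρlim : Tendsto ρ atTop (𝓝 0) := squeeze_zero (fun k => (hρ k).1) (fun k => (hρ k).2) hr
  have hlim := (tendsto_inv_smul_of_apply_eq hconv.closure hx₀.1 hP hQ hsymm htlim
    (by simpa using (hρlim.smul_const (y - x₀)).const_add τ) (.of_forall fun k => (hfr k).1)
    (.of_forall fun k => by rw [hu _ (hfr k), hu x₀ hx₀])).const_mul c
  have hnonpos : c * (-(1 / 2 : ℝ) • Q τ τ) ≤ 0 := le_of_tendsto' hlim fun k => by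
    have heq : c * ((t k)⁻¹ • P x₀ (τ + ρ k • (y - x₀)))
        = c ^ 2 * (t k)⁻¹ * ρ k * ℓ (y - x₀) := by
      simp only [hPℓ, map_add, map_smul, smul_apply, smul_eq_mul, hτ]
      ring
    have hcoef : 0 ≤ c ^ 2 * (t k)⁻¹ * ρ k :=
      mul_nonneg (mul_nonneg (sq_nonneg c) (inv_nonneg.2 (ht k).1.le)) (hρ k).1
    rw [heq]
    exact mul_nonpos_of_nonneg_of_nonpos hcoef hℓa.le
  rw [smul_eq_mul] at hnonpos
  linarith

end FrontierDerivatives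

section MirandaTalenti

section ReillyField

variable {E ι : Type*} [NormedAddCommGroup E] [NormedSpace ℝ E] [Fintype ι]

/-- Reilly's vector field `Δu ∇u - D²u ∇u`, for a function with first and second derivatives `p` and
`q` at the point considered. The traces are taken over a finite family `b`, which need not be an
orthonormal basis. -/
noncomputable def reillyField (b : ι → E) (p : E →L[ℝ] ℝ) (q : E →L[ℝ] E →L[ℝ] ℝ) : E :=
  ∑ i, ∑ j, p (b j) • (q (b i) (b i) • b j - q (b j) (b i) • b i)

/-- For `c = |∇u|` and the unit normal `ℓ`, this is `|∇u|` times the trace of `q` over the tangent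
directions, written as a sum of squares over the tangent vectors `ℓ (b j) • b i - ℓ (b i) • b j`. -/
lemma apply_reillyField_smul (b : ι → E) (ℓ : E →L[ℝ] ℝ) (c : ℝ) {q : E →L[ℝ] E →L[ℝ] ℝ}
    (hsymm : ∀ v w, q v w = q w v) :
    ℓ (reillyField b (c • ℓ) q) = (∑ i, ∑ j, c * q (ℓ (b j) • b i - ℓ (b i) • b j)
      (ℓ (b j) • b i - ℓ (b i) • b j)) / 2 := by
  have hswap : ∑ i, ∑ j, c * (ℓ (b i) ^ 2 * q (b j) (b j))
      = ∑ i, ∑ j, c * (ℓ (b j) ^ 2 * q (b i) (b i)) := Finset.sum_comm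
  have hsquare : ∀ i j, c * q (ℓ (b j) • b i - ℓ (b i) • b j) (ℓ (b j) • b i - ℓ (b i) • b j)
      = c * (ℓ (b j) ^ 2 * q (b i) (b i)) + c * (ℓ (b i) ^ 2 * q (b j) (b j))
        - 2 * (c * (ℓ (b i) * ℓ (b j) * q (b j) (b i))) := fun i j => by
    simp only [map_sub, map_smul, sub_apply, smul_apply, smul_eq_mul, hsymm (b i) (b j)]
    ring
  have hfield : ℓ (reillyField b (c • ℓ) q) = ∑ i, ∑ j, (c * (ℓ (b j) ^ 2 * q (b i) (b i))
      - c * (ℓ (b i) * ℓ (b j) * q (b j) (b i))) := by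
    simp only [reillyField, map_sum, map_sub, map_smul, smul_apply, smul_eq_mul]
    exact Finset.sum_congr rfl fun i _ => Finset.sum_congr rfl fun j _ => by ring
  simp only [hfield, hsquare, Finset.sum_add_distrib, Finset.sum_sub_distrib, ← Finset.mul_sum]
    at hswap ⊢
  rw [hswap]
  ring

lemma apply_reillyField_nonneg (b : ι → E) {ℓ : E →L[ℝ] ℝ} {c : ℝ} {q : E →L[ℝ] E →L[ℝ] ℝ}
    (hsymm : ∀ v w, q v w = q w v) (hker : ∀ τ, ℓ τ = 0 → 0 ≤ c * q τ τ) :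
    0 ≤ ℓ (reillyField b (c • ℓ) q) := by
  rw [apply_reillyField_smul b ℓ c hsymm]
  refine div_nonneg (Finset.sum_nonneg fun i _ => Finset.sum_nonneg fun j _ => hker _ ?_)
    zero_le_two
  simp [mul_comm]

variable [FiniteDimensional ℝ E] [MeasurableSpace E] [BorelSpace E] {μ : Measure E}
  [μ.IsAddHaarMeasure]

lemma hasWeakDivergenceOn_reillyField {U : Set E} {u : E → ℝ} (hU : IsOpen U)
    (hu : ContDiffOn ℝ 2 u U) (b : ι → E) :
    HasWeakDivergenceOn (fun x => reillyField b (fderiv ℝ u x) (fderiv ℝ (fderiv ℝ u) x))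
      (fun x => (∑ i, fderiv ℝ (fderiv ℝ u) x (b i) (b i)) ^ 2
        - ∑ i, ∑ j, fderiv ℝ (fderiv ℝ u) x (b i) (b j) ^ 2) U μ := by
  have hdu : ContDiffOn ℝ 1 (fderiv ℝ u) U := hu.fderiv_of_isOpen hU (by norm_num)
  have hpartial : ∀ v, ContDiffOn ℝ 1 (fun x => fderiv ℝ u x v) U := fun v =>
    hdu.clm_apply contDiffOn_const
  have hsecond : ∀ x ∈ U, ∀ v w,
      fderiv ℝ (fun y => fderiv ℝ u y v) x w = fderiv ℝ (fderiv ℝ u) x w v := fun x hx v w => by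
    rw [fderiv_clm_apply ((hdu.differentiableOn one_ne_zero).differentiableAt (hU.mem_nhds hx))
      (differentiableAt_const v)]
    simp
  have hsymm : ∀ x ∈ U, ∀ v w,
      fderiv ℝ (fderiv ℝ u) x v w = fderiv ℝ (fderiv ℝ u) x w v := fun x hx =>
    (hu.contDiffAt (hU.mem_nhds hx)).isSymmSndFDerivAt (by simp)
  refine (HasWeakDivergenceOn.sum hU Finset.univ fun i _ => HasWeakDivergenceOn.sum hU Finset.univ
    fun j _ => hasWeakDivergenceOn_minor hU (hpartial (b i)) (hpartial (b j)) (b i) (b j)).congr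
    (fun x hx => ?_) fun x hx => ?_
  · simp only [reillyField, hsecond x hx]
  · simp only [hsecond x hx, Finset.sum_sub_distrib, sq, Finset.sum_mul_sum]
    congr 1
    · exact Finset.sum_congr rfl fun i _ => Finset.sum_congr rfl fun j _ => mul_comm _ _
    · exact Finset.sum_congr rfl fun i _ => Finset.sum_congr rfl fun j _ => by
        rw [hsymm x hx (b j) (b i)]

end ReillyField

lemma exists_hasFDerivWithinAt_closure {E : Type*} [NormedAddCommGroup E] [NormedSpace ℝ E]
    {Ω : Set E} {u : E → ℝ} (hΩ : IsOpen Ω) (hconv : Convex ℝ Ω)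
    (hu : ContDiffOn ℝ 2 u (closure Ω)) :
    ∃ (P : E → E →L[ℝ] ℝ) (Q : E → E →L[ℝ] E →L[ℝ] ℝ),
      (∀ x ∈ closure Ω, HasFDerivWithinAt u (P x) (closure Ω) x) ∧
      (∀ x ∈ closure Ω, HasFDerivWithinAt P (Q x) (closure Ω) x) ∧
      ContinuousOn P (closure Ω) ∧ ContinuousOn Q (closure Ω) ∧
      (∀ x ∈ closure Ω, ∀ v w, Q x v w = Q x w v) ∧
      EqOn (fderiv ℝ u) P Ω ∧ EqOn (fderiv ℝ (fderiv ℝ u)) Q Ω := by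
  rcases Ω.eq_empty_or_nonempty with rfl | hne
  · simp
  have hsub : Ω ⊆ interior (closure Ω) := interior_maximal subset_closure hΩ
  have hud : UniqueDiffOn ℝ (closure Ω) := uniqueDiffOn_convex hconv.closure (hne.mono hsub)
  have hnhds : ∀ x ∈ Ω, closure Ω ∈ 𝓝 x := fun x hx => mem_interior_iff_mem_nhds.1 (hsub hx)
  let P := fderivWithin ℝ u (closure Ω)
  have hP : ContDiffOn ℝ 1 P (closure Ω) := hu.fderivWithin hud (by norm_num)
  have heq : EqOn (fderiv ℝ u) P Ω := fun x hx => (fderivWithin_of_mem_nhds (hnhds x hx)).symm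
  refine ⟨P, fderivWithin ℝ P (closure Ω),
    fun x hx => (hu.differentiableOn two_ne_zero x hx).hasFDerivWithinAt,
    fun x hx => (hP.differentiableOn one_ne_zero x hx).hasFDerivWithinAt, hP.continuousOn,
    hP.continuousOn_fderivWithin hud le_rfl,
    fun x hx => (hu x hx).isSymmSndFDerivWithinAt (by simp) hud (closure_mono hsub hx) hx,
    heq, fun x hx => ?_⟩
  rw [fderivWithin_of_mem_nhds (hnhds x hx)]
  exact (heq.eventuallyEq_of_mem (hΩ.mem_nhds hx)).fderiv_eq

/-- On the boundary the gradient of `u` is normal, so Reilly's field only sees the second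
derivatives of `u` in tangential directions, whose sign is that of the curvature. -/
theorem integral_sum_sq_fderiv_fderiv_le {E ι : Type*} [NormedAddCommGroup E]
    [InnerProductSpace ℝ E] [FiniteDimensional ℝ E] [MeasurableSpace E] [BorelSpace E] [Fintype ι]
    {μ : Measure E} [μ.IsAddHaarMeasure] {Ω : Set E} {u : E → ℝ} (hΩ : IsOpen Ω)
    (hconv : Convex ℝ Ω) (hbd : Bornology.IsBounded Ω) (hu : ContDiffOn ℝ 2 u (closure Ω))
    (hbc : ∀ x ∈ frontier Ω, u x = 0) (b : ι → E) :
    ∫ x in Ω, ∑ i, ∑ j, fderiv ℝ (fderiv ℝ u) x (b i) (b j) ^ 2 ∂μ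
      ≤ ∫ x in Ω, (∑ i, fderiv ℝ (fderiv ℝ u) x (b i) (b i)) ^ 2 ∂μ := by
  obtain ⟨P, Q, hP, hQ, hPc, hQc, hsymm, hPu, hQu⟩ := exists_hasFDerivWithinAt_closure hΩ hconv hu
  have hint : ∀ f : (E →L[ℝ] E →L[ℝ] ℝ) → ℝ, Continuous f →
      IntegrableOn (fun x => f (fderiv ℝ (fderiv ℝ u) x)) Ω μ := fun f hf =>
    ((((hf.comp_continuousOn hQc).integrableOn_compact hbd.isCompact_closure).mono_set
      subset_closure).congr_fun (fun x hx => by simp [hQu hx]) hΩ.measurableSet)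
  have hintHess := hint (fun q => ∑ i, ∑ j, q (b i) (b j) ^ 2) (by fun_prop)
  have hintLap := hint (fun q => (∑ i, q (b i) (b i)) ^ 2) (by fun_prop)
  have hfield : ContinuousOn (fun x => reillyField b (P x) (Q x)) (closure Ω) := by
    unfold reillyField
    fun_prop
  rw [← sub_nonneg, ← integral_sub hintLap hintHess]
  refine ((hasWeakDivergenceOn_reillyField hΩ (hu.mono subset_closure) b).congr
    (fun x hx => by rw [hPu hx, hQu hx]) (eqOn_refl _ _)).integral_nonneg hΩ hconv hbd hfield
    (hintLap.sub hintHess) fun x₀ hx₀ ℓ hmax => ?_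
  rcases eq_or_ne ℓ 0 with rfl | hℓ
  · simp
  obtain ⟨c, hc⟩ := exists_eq_smul_of_isMaxOn hΩ hconv hx₀ (hP x₀ hx₀.1) hbc hℓ hmax
  rw [hc]
  exact apply_reillyField_nonneg b (hsymm x₀ hx₀.1) fun τ hτ =>
    mul_apply_nonneg_of_apply_eq_zero hΩ hconv hx₀ hP (hQ x₀ hx₀.1) (hsymm x₀ hx₀.1) hbc hℓ hmax
      hc hτ

end MirandaTalenti

end

lemma hessSq_eq_sum_fderiv_fderiv {n : ℕ} {u : EuclideanSpace ℝ (Fin n) → ℝ}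
    {x : EuclideanSpace ℝ (Fin n)} (hu : DifferentiableAt ℝ (fderiv ℝ u) x) :
    hessSq u x = ∑ i, ∑ j, fderiv ℝ (fderiv ℝ u) x (EuclideanSpace.single i 1)
      (EuclideanSpace.single j 1) ^ 2 := by
  rw [hessSq, Finset.sum_comm]
  simp [fderiv_clm_apply hu (differentiableAt_const _)]

lemma lap_eq_sum_fderiv_fderiv {n : ℕ} {u : EuclideanSpace ℝ (Fin n) → ℝ}
    {x : EuclideanSpace ℝ (Fin n)} (hu : DifferentiableAt ℝ (fderiv ℝ u) x) :
    lap u x = ∑ i, fderiv ℝ (fderiv ℝ u) x (EuclideanSpace.single i 1)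
      (EuclideanSpace.single i 1) := by
  simp [lap, fderiv_clm_apply hu (differentiableAt_const _)]

theorem integral_hessSq_le_integral_lap_sq {n : ℕ} {Ω : Set (EuclideanSpace ℝ (Fin n))}
    {u : EuclideanSpace ℝ (Fin n) → ℝ} (hΩ : IsOpen Ω) (hconv : Convex ℝ Ω)
    (hbd : Bornology.IsBounded Ω) (hu : ContDiffOn ℝ 2 u (closure Ω))
    (hbc : ∀ x ∈ frontier Ω, u x = 0) :
    ∫ x in Ω, hessSq u x ≤ ∫ x in Ω, lap u x ^ 2 := by
  have hdiff : ∀ x ∈ Ω, DifferentiableAt ℝ (fderiv ℝ u) x := fun x hx =>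
    (((hu.mono subset_closure).fderiv_of_isOpen hΩ (m := 1) (by norm_num)).differentiableOn
      one_ne_zero).differentiableAt (hΩ.mem_nhds hx)
  rw [setIntegral_congr_fun hΩ.measurableSet fun x hx => hessSq_eq_sum_fderiv_fderiv (hdiff x hx),
    setIntegral_congr_fun hΩ.measurableSet fun x hx =>
      congrArg (· ^ 2) (lap_eq_sum_fderiv_fderiv (hdiff x hx))]
  exact integral_sum_sq_fderiv_fderiv_le hΩ hconv hbd hu hbc _

theorem steklov_stmt_12_general {n : ℕ} {Ω : Set (EuclideanSpace ℝ (Fin n))} (hΩ : IsOpen Ω)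
    (hconv : Convex ℝ Ω) (hbd : Bornology.IsBounded Ω) {u : EuclideanSpace ℝ (Fin n) → ℝ}
    {lam : ℝ} (hu : ContDiffOn ℝ 2 u (closure Ω)) (heig : ∀ x ∈ Ω, lap u x + lam * u x = 0)
    (hbc : ∀ x ∈ frontier Ω, u x = 0) :
    ∫ x in Ω, hessSq u x ≤ lam ^ 2 * ∫ x in Ω, u x ^ 2 :=
  calc ∫ x in Ω, hessSq u x ≤ ∫ x in Ω, lap u x ^ 2 :=
        integral_hessSq_le_integral_lap_sq hΩ hconv hbd hu hbc
    _ = ∫ x in Ω, lam ^ 2 * u x ^ 2 := setIntegral_congr_fun hΩ.measurableSet fun x hx => by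
        simp only [eq_neg_of_add_eq_zero_left (heig x hx), neg_sq, mul_pow]
    _ = lam ^ 2 * ∫ x in Ω, u x ^ 2 := integral_const_mul _ _

/-- **Dirichlet case.** Let `Ω ⊂ ℝⁿ` be a bounded smooth convex domain
and `u` a Dirichlet eigenfunction: `Δu + λu = 0` in `Ω`, `u = 0` on `∂Ω`, normalized
with `∫_Ω u² = 1`. Then `∫_Ω |D²u|² ≤ λ²`. -/
theorem steklov_stmt_12 {n : ℕ} (hn : 2 ≤ n) (Ω : Set (EuclideanSpace ℝ (Fin n)))
    (hΩopen : IsOpen Ω) (hΩconv : Convex ℝ Ω) (hΩbd : Bornology.IsBounded Ω)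
    (hΩne : Ω.Nonempty) (hΩsm : HasSmoothBoundary Ω)
    (u : EuclideanSpace ℝ (Fin n) → ℝ) (lam : ℝ)
    (hu : ContDiffOn ℝ 2 u (closure Ω))
    (heig : ∀ x ∈ Ω, lap u x + lam * u x = 0)
    (hbc : ∀ x ∈ frontier Ω, u x = 0)
    (hnorm : (∫ x in Ω, (u x) ^ 2) = 1) :
    (∫ x in Ω, hessSq u x) ≤ lam ^ 2 := by
  simpa only [hnorm, mul_one] using
    steklov_stmt_12_general hΩopen hΩconv hΩbd hu heig hbc
end

section
/- Let Ω ⊂ ℝⁿ be a bounded smooth convex domain, β > 0, and u a Robin eigenfunction: Δu + ηu = 0 in Ω, ∂_ν u + βu = 0 on ∂Ω, normalized with ∫_Ω u² = 1. Then ∫_Ω |D²u|² ≤ η². -/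
open MeasureTheory Metric Set Filter
open scoped RealInnerProductSpace

/-!
Reilly's formula writes `∫_Ω ((Δu)² - |D²u|²)` as a boundary integral. To obtain it without surface
measure, let `θ(f)` be a cutoff depending only on a defining function `f`, and `U = ∇u`, `A = D²u`.
The second-order minors of `A` are null Lagrangians, so `∫ θ(f) ((tr A)² - tr A²)` equals
`-∫ θ'(f) (⟪∇f, U⟫ tr A - ⟪∇f, A U⟫)`. Up to a divergence of the field `⟪∇f, U⟫ U_T`, where `U_T` is
the part of `U` orthogonal to `∇f`, the integrand is a density `R` containing no second derivative
of `u` except `⟪∇f, A U_T⟫`; this field is tangent to the level sets of `f`, so its divergence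
integrates to zero against `θ'(f)`. Since `θ' ≤ 0`, letting `θ(f)` increase to the indicator of `Ω`
reduces the theorem to `R ≥ 0` on the boundary. There the Robin condition, differentiated along
`U_T`, turns the second-derivative term into `2β|∇f||U_T|² ≥ 0` plus curvature terms, which are
nonnegative because `Ω` is convex.
-/

open scoped Convolution Gradient Topology

section Trace

variable {E : Type*} [NormedAddCommGroup E] [NormedSpace ℝ E] [FiniteDimensional ℝ E]

/-- The trace as a continuous linear form on `E →L[ℝ] E`, so that `traceCLM (fderiv ℝ X x)` is the
divergence of the vector field `X` at `x`. -/
noncomputable def traceCLM : (E →L[ℝ] E) →L[ℝ] ℝ :=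
  (LinearMap.trace ℝ E ∘ₗ ContinuousLinearMap.coeLM ℝ).toContinuousLinearMap

theorem traceCLM_smulRight (l : E →L[ℝ] ℝ) (v : E) : traceCLM (l.smulRight v) = l v :=
  LinearMap.trace_smulRight (l : E →ₗ[ℝ] ℝ) v

theorem traceCLM_comp_comm (A B : E →L[ℝ] E) : traceCLM (A ∘L B) = traceCLM (B ∘L A) :=
  LinearMap.trace_mul_comm ℝ (A : E →ₗ[ℝ] E) (B : E →ₗ[ℝ] E)

theorem continuousOn_traceCLM_sq_sub_traceCLM_comp {X : Type*} [TopologicalSpace X] {s : Set X}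
    {A : X → E →L[ℝ] E} (hA : ContinuousOn A s) :
    ContinuousOn (fun x => traceCLM (A x) ^ 2 - traceCLM (A x ∘L A x)) s :=
  ((traceCLM.continuous.comp_continuousOn hA).pow 2).sub
    (traceCLM.continuous.comp_continuousOn (hA.clm_comp hA))

end Trace

section TraceInner

variable {E : Type*} [NormedAddCommGroup E] [InnerProductSpace ℝ E] [FiniteDimensional ℝ E]
  {ι : Type*} [Fintype ι]

theorem traceCLM_eq_sum_inner (b : OrthonormalBasis ι ℝ E) (A : E →L[ℝ] E) :
    traceCLM A = ∑ i, ⟪b i, A (b i)⟫ :=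
  LinearMap.trace_eq_sum_inner _ b

theorem traceCLM_comp_eq_sum_inner_mul_inner (b : OrthonormalBasis ι ℝ E) (A B : E →L[ℝ] E) :
    traceCLM (A ∘L B) = ∑ i, ∑ j, ⟪b i, A (b j)⟫ * ⟪b j, B (b i)⟫ := by
  rw [traceCLM_eq_sum_inner b]
  refine Finset.sum_congr rfl fun i _ => ?_
  rw [ContinuousLinearMap.comp_apply, ← b.sum_repr (B (b i)), map_sum, inner_sum]
  refine Finset.sum_congr rfl fun j _ => ?_
  rw [b.sum_repr, map_smul, real_inner_smul_right, b.repr_apply_apply, mul_comm]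

end TraceInner

section Cutoff

variable {E F : Type*} [NormedAddCommGroup E] [NormedSpace ℝ E] [NormedAddCommGroup F]
  [NormedSpace ℝ F] {χ : E → ℝ} {Y : E → F} {V : Set E}

theorem contDiff_smul_of_tsupport_subset {n : WithTop ℕ∞} (hV : IsOpen V) (hχ : ContDiff ℝ n χ)
    (hχV : tsupport χ ⊆ V) (hY : ContDiffOn ℝ n Y V) : ContDiff ℝ n fun x => χ x • Y x := by
  refine contMDiff_iff_contDiff.1 (contMDiff_of_tsupport fun x hx => ContDiffAt.contMDiffAt ?_)
  exact hχ.contDiffAt.smul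
    (hY.contDiffAt (hV.mem_nhds (hχV (tsupport_smul_subset_left _ _ hx))))

theorem fderiv_smul_of_tsupport_subset (hV : IsOpen V) (hχ : ContDiff ℝ 1 χ) (hχV : tsupport χ ⊆ V)
    (hY : ContDiffOn ℝ 1 Y V) (x : E) :
    fderiv ℝ (fun y => χ y • Y y) x = χ x • fderiv ℝ Y x + (fderiv ℝ χ x).smulRight (Y x) := by
  by_cases hx : x ∈ tsupport χ
  · exact fderiv_fun_smul (hχ.differentiable one_ne_zero x)
      ((hY.contDiffAt (hV.mem_nhds (hχV hx))).differentiableAt one_ne_zero)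
  · have hχY : x ∉ tsupport fun y => χ y • Y y := fun h => hx (tsupport_smul_subset_left _ _ h)
    rw [fderiv_of_notMem_tsupport ℝ hχY, fderiv_of_notMem_tsupport ℝ hx,
      image_eq_zero_of_notMem_tsupport hx]
    ext; simp

variable [FiniteDimensional ℝ E]

theorem exists_contDiff_hasCompactSupport_eventuallyEq {K : Set E} (hK : IsCompact K)
    (hV : IsOpen V) (hKV : K ⊆ V) (hY : ContDiffOn ℝ 1 Y V) :
    ∃ W : E → F, ContDiff ℝ 1 W ∧ HasCompactSupport W ∧ ∀ x ∈ K, W =ᶠ[𝓝 x] Y := by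
  obtain ⟨S, hS, hKS, hSV⟩ := exists_compact_between hK hV hKV
  obtain ⟨ζ, hζ_one, hζ_zero, -⟩ := exists_contMDiffMap_one_nhds_of_subset_interior
    (modelWithCornersSelf ℝ E) (n := 1) hK.isClosed hKS
  have hζS : tsupport ζ ⊆ S :=
    closure_minimal (fun x hx => by_contra fun hxS => hx (hζ_zero x hxS)) hS.isClosed
  have hζ : HasCompactSupport ζ :=
    HasCompactSupport.of_support_subset_isCompact hS (subset_closure.trans hζS)
  refine ⟨fun x => ζ x • Y x, contDiff_smul_of_tsupport_subset hV ζ.contMDiff.contDiff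
    (hζS.trans hSV) hY, hζ.smul_right, fun x hx => ?_⟩
  filter_upwards [eventually_nhdsSet_iff_forall.1 hζ_one x hx] with y hy
  rw [show ζ y = 1 from hy, one_smul]

end Cutoff

section NullLagrangian

variable {E : Type*} [NormedAddCommGroup E] [NormedSpace ℝ E] [MeasurableSpace E] [BorelSpace E]

theorem integrable_fderiv_mul_fderiv {μ : Measure E} [IsFiniteMeasureOnCompacts μ] {φ w : E → ℝ}
    (hφ : ContDiff ℝ 1 φ) (hφc : HasCompactSupport φ) (hw : ContDiff ℝ 1 w) (a b : E) :
    Integrable (fun x => fderiv ℝ φ x a * fderiv ℝ w x b) μ := by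
  refine Continuous.integrable_of_hasCompactSupport (.mul ?_ ?_) (hφc.fderiv_apply ℝ a).mul_right
  · exact (hφ.continuous_fderiv one_ne_zero).clm_apply continuous_const
  · exact (hw.continuous_fderiv one_ne_zero).clm_apply continuous_const

variable [FiniteDimensional ℝ E] {μ : Measure E} [μ.IsAddHaarMeasure]

theorem integral_fderiv_apply_eq_zero {F : Type*} [NormedAddCommGroup F] [NormedSpace ℝ F]
    {g : E → F} (hg : ContDiff ℝ 1 g) (hgc : HasCompactSupport g) (v : E) :
    ∫ x, fderiv ℝ g x v ∂μ = 0 := by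
  have hg'_cont : Continuous fun x => fderiv ℝ g x v :=
    (hg.continuous_fderiv one_ne_zero).clm_apply continuous_const
  have hparts := integral_smul_fderiv_eq_neg_fderiv_smul_of_integrable (μ := μ)
    (f := fun _ => (1 : ℝ)) (g := g) (v := v) (by simp)
    (by simpa using hg'_cont.integrable_of_hasCompactSupport (hgc.fderiv_apply ℝ v))
    (by simpa using hg.continuous.integrable_of_hasCompactSupport hgc)
    (fun x _ => differentiableAt_const _) (fun x _ => hg.differentiable one_ne_zero x)
  simpa using hparts

theorem fderiv_convolution_right_apply (L : ℝ →L[ℝ] ℝ →L[ℝ] ℝ) {f g : E → ℝ}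
    (hf : Continuous f) (hg : ContDiff ℝ 1 g) (hgc : HasCompactSupport g) (z v : E) :
    fderiv ℝ (f ⋆[L, μ] g) z v = (f ⋆[L, μ] fun x => fderiv ℝ g x v) z := by
  rw [(hgc.hasFDerivAt_convolution_right L hf.locallyIntegrable hg z).fderiv,
    convolution_precompR_apply L hf.locallyIntegrable (hgc.fderiv ℝ)
      (hg.continuous_fderiv one_ne_zero)]

theorem fderiv_convolution_left_apply (L : ℝ →L[ℝ] ℝ →L[ℝ] ℝ) {f g : E → ℝ}
    (hf : ContDiff ℝ 1 f) (hfc : HasCompactSupport f) (hg : Continuous g) (z v : E) :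
    fderiv ℝ (f ⋆[L, μ] g) z v = ((fun x => fderiv ℝ f x v) ⋆[L, μ] g) z := by
  rw [← convolution_flip, ← convolution_flip (f := fun x => fderiv ℝ f x v)]
  exact fderiv_convolution_right_apply L.flip hg hf hfc z v

/- Two derivatives of the convolution of `φ` with the reflection of `w`, one falling on each factor,
can be taken in either order; no second derivative of `φ` or `w` is needed. -/
theorem integral_fderiv_mul_fderiv_comm_s14 {φ w : E → ℝ} (hφ : ContDiff ℝ 1 φ)
    (hφc : HasCompactSupport φ) (hw : ContDiff ℝ 1 w) (hwc : HasCompactSupport w) (a b : E) :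
    ∫ x, fderiv ℝ φ x a * fderiv ℝ w x b ∂μ = ∫ x, fderiv ℝ φ x b * fderiv ℝ w x a ∂μ := by
  let L := ContinuousLinearMap.mul ℝ ℝ
  let wneg : E → ℝ := fun x => w (-x)
  have hwneg : ContDiff ℝ 1 wneg := hw.comp contDiff_neg
  have hwneg_supp : HasCompactSupport wneg := hwc.comp_homeomorph (Homeomorph.neg E)
  have fderiv_wneg (x v : E) : fderiv ℝ wneg x v = -fderiv ℝ w (-x) v := by
    have hderiv := (hw.differentiable one_ne_zero (-x)).hasFDerivAt.comp x
      (hasFDerivAt_id x).fun_neg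
    rw [show wneg = w ∘ Neg.neg from rfl, hderiv.fderiv]
    simp
  have fderiv_continuous {g : E → ℝ} (hg : ContDiff ℝ 1 g) (v : E) :
      Continuous fun x => fderiv ℝ g x v :=
    (hg.continuous_fderiv one_ne_zero).clm_apply continuous_const
  have transfer : (φ ⋆[L, μ] fun x => fderiv ℝ wneg x b)
      = ((fun x => fderiv ℝ φ x b) ⋆[L, μ] wneg) := by
    ext z
    rw [← fderiv_convolution_right_apply L hφ.continuous hwneg hwneg_supp,
      fderiv_convolution_left_apply L hφ hφc hwneg.continuous]
  have hmixed := congrArg (fun g => fderiv ℝ g 0 a) transfer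
  rw [fderiv_convolution_left_apply L hφ hφc (fderiv_continuous hwneg b),
    fderiv_convolution_right_apply L (fderiv_continuous hφ b) hwneg hwneg_supp] at hmixed
  simpa only [convolution_def, fderiv_wneg, zero_sub, neg_neg, L, ContinuousLinearMap.mul_apply',
    mul_neg, integral_neg, neg_inj] using hmixed

theorem integral_traceCLM_fderiv_eq_zero {X : E → E} (hX : ContDiff ℝ 1 X)
    (hXc : HasCompactSupport X) : ∫ x, traceCLM (fderiv ℝ X x) ∂μ = 0 := by
  have hint : Integrable (fderiv ℝ X) μ :=
    (hX.continuous_fderiv one_ne_zero).integrable_of_hasCompactSupport (hXc.fderiv ℝ)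
  have hzero : ∫ x, fderiv ℝ X x ∂μ = 0 := by
    ext v
    rw [ContinuousLinearMap.integral_apply hint]
    exact integral_fderiv_apply_eq_zero hX hXc v
  rw [ContinuousLinearMap.integral_comp_comm _ hint, hzero, map_zero]

theorem integral_cutoff_div_eq_zero {χ : E → ℝ} {Y : E → E} {V : Set E} (hV : IsOpen V)
    (hχ : ContDiff ℝ 1 χ) (hχc : HasCompactSupport χ) (hχV : tsupport χ ⊆ V)
    (hY : ContDiffOn ℝ 1 Y V) :
    ∫ x, (χ x * traceCLM (fderiv ℝ Y x) + fderiv ℝ χ x (Y x)) ∂μ = 0 := by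
  rw [← integral_traceCLM_fderiv_eq_zero (μ := μ)
    (contDiff_smul_of_tsupport_subset hV hχ hχV hY) hχc.smul_right]
  simp only [fderiv_smul_of_tsupport_subset hV hχ hχV hY, map_add, map_smul, smul_eq_mul,
    traceCLM_smulRight]

end NullLagrangian

section Bochner

variable {E : Type*} [NormedAddCommGroup E] [InnerProductSpace ℝ E]

theorem inner_fderiv_apply_eq_fderiv_inner {X : E → E} {x : E} (hX : DifferentiableAt ℝ X x)
    (e v : E) : ⟪e, fderiv ℝ X x v⟫ = fderiv ℝ (fun y => ⟪e, X y⟫) x v := by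
  simp [fderiv_inner_apply ℝ (differentiableAt_const e) hX]

variable [FiniteDimensional ℝ E] [MeasurableSpace E] [BorelSpace E] {μ : Measure E}
  [μ.IsAddHaarMeasure]

theorem integral_traceCLM_mul_sub_traceCLM_comp_eq_zero {X Y : E → E} (hX : ContDiff ℝ 1 X)
    (hXc : HasCompactSupport X) (hY : ContDiff ℝ 1 Y) (hYc : HasCompactSupport Y) :
    ∫ x, (traceCLM (fderiv ℝ X x) * traceCLM (fderiv ℝ Y x)
      - traceCLM (fderiv ℝ X x ∘L fderiv ℝ Y x)) ∂μ = 0 := by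
  let b := stdOrthonormalBasis ℝ E
  have component_contDiff {Z : E → E} (hZ : ContDiff ℝ 1 Z) (i) :
      ContDiff ℝ 1 fun x => ⟪b i, Z x⟫ := contDiff_const.inner ℝ hZ
  have component_supp {Z : E → E} (hZ : HasCompactSupport Z) (i) :
      HasCompactSupport fun x => ⟪b i, Z x⟫ := hZ.comp_left (inner_zero_right (b i))
  let minor (i j) (x : E) : ℝ :=
    fderiv ℝ (fun y => ⟪b i, X y⟫) x (b i) * fderiv ℝ (fun y => ⟪b j, Y y⟫) x (b j)
      - fderiv ℝ (fun y => ⟪b i, X y⟫) x (b j) * fderiv ℝ (fun y => ⟪b j, Y y⟫) x (b i)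
  have integrable_mul (i j) (v w : E) := integrable_fderiv_mul_fderiv (μ := μ)
    (component_contDiff hX i) (component_supp hXc i) (component_contDiff hY j) v w
  have integrable_minor (i j) : Integrable (minor i j) μ :=
    (integrable_mul i j _ _).sub (integrable_mul i j _ _)
  have integral_minor (i j) : ∫ x, minor i j x ∂μ = 0 := by
    rw [integral_sub (integrable_mul i j _ _) (integrable_mul i j _ _), sub_eq_zero]
    exact integral_fderiv_mul_fderiv_comm_s14 (component_contDiff hX i) (component_supp hXc i)
      (component_contDiff hY j) (component_supp hYc j) _ _
  have expand (x : E) : traceCLM (fderiv ℝ X x) * traceCLM (fderiv ℝ Y x)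
      - traceCLM (fderiv ℝ X x ∘L fderiv ℝ Y x) = ∑ i, ∑ j, minor i j x := by
    simp only [traceCLM_comp_eq_sum_inner_mul_inner b, traceCLM_eq_sum_inner b, Finset.sum_mul_sum,
      ← Finset.sum_sub_distrib, minor,
      inner_fderiv_apply_eq_fderiv_inner (hX.differentiable one_ne_zero x),
      inner_fderiv_apply_eq_fderiv_inner (hY.differentiable one_ne_zero x)]
  simp only [expand, integral_finsetSum _ fun i _ =>
    integrable_finsetSum _ fun j _ => integrable_minor i j,
    integral_finsetSum _ fun j _ => integrable_minor _ j, integral_minor, Finset.sum_const_zero]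

theorem integral_cutoff_bochner_eq_zero {χ : E → ℝ} {U : E → E} {V : Set E} (hV : IsOpen V)
    (hχ : ContDiff ℝ 1 χ) (hχc : HasCompactSupport χ) (hχV : tsupport χ ⊆ V)
    (hU : ContDiffOn ℝ 1 U V) :
    ∫ x, (χ x * (traceCLM (fderiv ℝ U x) ^ 2 - traceCLM (fderiv ℝ U x ∘L fderiv ℝ U x))
      + (fderiv ℝ χ x (U x) * traceCLM (fderiv ℝ U x) - fderiv ℝ χ x (fderiv ℝ U x (U x)))) ∂μ
      = 0 := by
  obtain ⟨W, hW, hWc, hWU⟩ := exists_contDiff_hasCompactSupport_eventuallyEq hχc hV hχV hU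
  rw [← integral_traceCLM_mul_sub_traceCLM_comp_eq_zero (μ := μ)
    (contDiff_smul_of_tsupport_subset hV hχ hχV hU) hχc.smul_right hW hWc]
  refine integral_congr_ae (.of_forall fun x => ?_)
  simp only [fderiv_smul_of_tsupport_subset hV hχ hχV hU]
  by_cases hx : x ∈ tsupport χ
  · have smulRight_comp : (fderiv ℝ χ x).smulRight (U x) ∘L fderiv ℝ U x
        = (fderiv ℝ χ x ∘L fderiv ℝ U x).smulRight (U x) := rfl
    simp only [(hWU x hx).fderiv_eq, ContinuousLinearMap.add_comp, ContinuousLinearMap.smul_comp,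
      smulRight_comp, map_add, map_smul, smul_eq_mul, traceCLM_smulRight,
      ContinuousLinearMap.comp_apply]
    ring
  · simp [image_eq_zero_of_notMem_tsupport hx, fderiv_of_notMem_tsupport ℝ hx]

end Bochner

section BoundaryDensity

variable {E : Type*} [NormedAddCommGroup E] [InnerProductSpace ℝ E]

/-- The component of `v` orthogonal to `w`; for `w` the gradient of a defining function, the part of
`v` tangent to the boundary. -/
noncomputable def tangentialPart (w v : E) : E := v - (⟪w, v⟫ / ⟪w, w⟫) • w

theorem inner_tangentialPart_right (w v : E) : ⟪w, tangentialPart w v⟫ = 0 := by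
  rcases eq_or_ne w 0 with rfl | hw
  · simp
  · rw [tangentialPart, inner_sub_right, real_inner_smul_right,
      div_mul_cancel₀ _ (inner_self_ne_zero.2 hw), sub_self]

theorem inner_tangentialPart_left (w v : E) :
    ⟪v, tangentialPart w v⟫ = ⟪tangentialPart w v, tangentialPart w v⟫ := by
  nth_rw 2 [tangentialPart]
  rw [inner_sub_left, real_inner_smul_left, inner_tangentialPart_right, mul_zero, sub_zero]

theorem contDiffAt_tangentialPart {G : Type*} [NormedAddCommGroup G] [NormedSpace ℝ G] {F U : G → E}
    {n : WithTop ℕ∞} {x : G} (hF : ContDiffAt ℝ n F x) (hU : ContDiffAt ℝ n U x) (hFx : F x ≠ 0) :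
    ContDiffAt ℝ n (fun y => tangentialPart (F y) (U y)) x :=
  hU.sub (((hF.inner ℝ hU).div (hF.inner ℝ hF) (inner_self_ne_zero.2 hFx)).smul hF)

theorem continuousOn_tangentialPart {X : Type*} [TopologicalSpace X] {s : Set X} {F U : X → E}
    (hF : ContinuousOn F s) (hU : ContinuousOn U s) (hF₀ : ∀ x ∈ s, F x ≠ 0) :
    ContinuousOn (fun x => tangentialPart (F x) (U x)) s :=
  hU.sub (((hF.inner hU).div (hF.inner hF) fun x hx => inner_self_ne_zero.2 (hF₀ x hx)).smul hF)

variable [FiniteDimensional ℝ E]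

/-- The boundary density of Reilly's formula at a point where a defining function `f` has gradient
`w` and Hessian `H`, for a field with value `v` and derivative `A`. For `v = ∇u`, `A = D²u` and
`f` a signed distance it is `II(∇_T u, ∇_T u) - 2 ⟪∇_T u, ∇_T (∂_ν u)⟫ + tr II * (∂_ν u)²`, where
`∇_T` is the tangential gradient and `II` the second fundamental form of the level set. -/
noncomputable def reillyDensity (w : E) (H : E →L[ℝ] E) (v : E) (A : E →L[ℝ] E) : ℝ :=
  ⟪H v, v⟫ - 2 * (⟪H (tangentialPart w v), v⟫ + ⟪w, A (tangentialPart w v)⟫)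
    + (⟪w, v⟫ / ⟪w, w⟫) ^ 2 * (⟪w, w⟫ * traceCLM H - 2 * ⟪H w, w⟫)

theorem continuousOn_reillyDensity {X : Type*} [TopologicalSpace X] {s : Set X} {F U : X → E}
    {H A : X → E →L[ℝ] E} (hF : ContinuousOn F s) (hH : ContinuousOn H s) (hU : ContinuousOn U s)
    (hA : ContinuousOn A s) (hF₀ : ∀ x ∈ s, F x ≠ 0) :
    ContinuousOn (fun x => reillyDensity (F x) (H x) (U x) (A x)) s := by
  have hT := continuousOn_tangentialPart hF hU hF₀
  have hFF : ∀ x ∈ s, ⟪F x, F x⟫ ≠ 0 := fun x hx => inner_self_ne_zero.2 (hF₀ x hx)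
  have htrace : ContinuousOn (fun x => traceCLM (H x)) s := traceCLM.continuous.comp_continuousOn hH
  exact (((hH.clm_apply hU).inner hU).sub (continuousOn_const.mul
    (((hH.clm_apply hT).inner hU).add (hF.inner (hA.clm_apply hT))))).add
    ((((hF.inner hU).div (hF.inner hF) hFF).pow 2).mul
      (((hF.inner hF).mul htrace).sub (continuousOn_const.mul ((hH.clm_apply hF).inner hF))))

theorem traceCLM_fderiv_inner_smul_tangentialPart {F U : E → E} {x : E}
    (hF : DifferentiableAt ℝ F x) (hU : DifferentiableAt ℝ U x) (hFx : F x ≠ 0) :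
    traceCLM (fderiv ℝ (fun y => ⟪F y, U y⟫ • tangentialPart (F y) (U y)) x)
      = ⟪F x, U x⟫ * traceCLM (fderiv ℝ U x) - ⟪F x, fderiv ℝ U x (U x)⟫
        - reillyDensity (F x) (fderiv ℝ F x) (U x) (fderiv ℝ U x) := by
  have hFF : ⟪F x, F x⟫ ≠ 0 := inner_self_ne_zero.2 hFx
  have hP := hF.inner ℝ hU
  have hc : HasFDerivAt (fun y => ⟪F y, U y⟫ * ⟪F y, F y⟫⁻¹)
      (⟪F x, U x⟫ • -(⟪F x, F x⟫ ^ 2)⁻¹ • fderiv ℝ (fun y => ⟪F y, F y⟫) x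
        + ⟪F x, F x⟫⁻¹ • fderiv ℝ (fun y => ⟪F y, U y⟫) x) x :=
    hP.hasFDerivAt.fun_mul ((hasDerivAt_inv hFF).comp_hasFDerivAt x (hF.inner ℝ hF).hasFDerivAt)
  simp only [tangentialPart, div_eq_mul_inv]
  rw [fderiv_fun_smul hP (hU.fun_sub (hc.differentiableAt.fun_smul hF)),
    fderiv_fun_sub hU (hc.differentiableAt.fun_smul hF), fderiv_fun_smul hc.differentiableAt hF,
    hc.fderiv]
  simp only [map_add, map_sub, map_smul, smul_eq_mul, traceCLM_smulRight, _root_.add_apply,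
    _root_.smul_apply, fderiv_inner_apply ℝ hF hU, fderiv_inner_apply ℝ hF hF, reillyDensity,
    tangentialPart, inner_sub_left, inner_sub_right, real_inner_smul_left, real_inner_smul_right,
    real_inner_comm (F x) (fderiv ℝ F x (F x))]
  field_simp
  ring

theorem inner_mul_traceCLM_sub_inner_nonneg {w : E} {H : E →L[ℝ] E}
    (hH : ∀ z, ⟪w, z⟫ = 0 → 0 ≤ ⟪H z, z⟫) : 0 ≤ ⟪w, w⟫ * traceCLM H - ⟪H w, w⟫ := by
  rcases eq_or_ne w 0 with rfl | hw
  · simp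
  set p := (ℝ ∙ w)ᗮ.starProjection
  have hp_idem : p ∘L p = p := (ℝ ∙ w)ᗮ.isIdempotentElem_starProjection
  have trace_nonneg : 0 ≤ traceCLM (H ∘L p) := by
    rw [← hp_idem, ← ContinuousLinearMap.comp_assoc, traceCLM_comp_comm,
      traceCLM_eq_sum_inner (stdOrthonormalBasis ℝ E)]
    refine Finset.sum_nonneg fun i _ => ?_
    rw [ContinuousLinearMap.comp_apply, ← Submodule.inner_starProjection_left_eq_right,
      real_inner_comm]
    exact hH _ (Submodule.mem_orthogonal_singleton_iff_inner_right.1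
      (Submodule.starProjection_apply_mem _ _))
  have hp : H ∘L p = H - ((⟪w, w⟫)⁻¹ • innerSL ℝ w).smulRight (H w) := by
    ext z
    simp [p, Submodule.starProjection_orthogonal_val, Submodule.starProjection_singleton,
      div_eq_inv_mul]
  rw [hp, map_sub, traceCLM_smulRight] at trace_nonneg
  have hww : 0 < ⟪w, w⟫ := real_inner_self_pos.2 hw
  calc 0 ≤ ⟪w, w⟫ * (traceCLM H - ((⟪w, w⟫)⁻¹ • innerSL ℝ w) (H w)) :=
        mul_nonneg hww.le trace_nonneg
    _ = ⟪w, w⟫ * traceCLM H - ⟪H w, w⟫ := by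
        simp [real_inner_comm w, field]

theorem reillyDensity_nonneg {w v : E} {H A : E →L[ℝ] E} (hH_symm : (H : E →ₗ[ℝ] E).IsSymmetric)
    (hH : ∀ z, ⟪w, z⟫ = 0 → 0 ≤ ⟪H z, z⟫)
    (hA : ⟪H (tangentialPart w v), v⟫ + ⟪w, A (tangentialPart w v)⟫
      ≤ ⟪w, v⟫ / ⟪w, w⟫ * ⟪H (tangentialPart w v), w⟫) :
    0 ≤ reillyDensity w H v A := by
  set t := tangentialPart w v with ht
  set c := ⟪w, v⟫ / ⟪w, w⟫
  have hv : v = t + c • w := by simp [ht, tangentialPart, c]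
  have hHt := hH t (inner_tangentialPart_right w v)
  have hHw := mul_nonneg (sq_nonneg c) (inner_mul_traceCLM_sub_inner_nonneg hH)
  have hsymm : ⟪H w, t⟫ = ⟪H t, w⟫ := (hH_symm w t).trans (real_inner_comm _ _)
  have hHv : ⟪H v, v⟫ = ⟪H t, t⟫ + 2 * c * ⟪H t, w⟫ + c ^ 2 * ⟪H w, w⟫ := by
    rw [hv]
    simp only [map_add, map_smul, inner_add_left, inner_add_right, real_inner_smul_left,
      real_inner_smul_right, hsymm]
    ring
  rw [reillyDensity, ← ht, hHv]
  linarith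

end BoundaryDensity

section DefiningFunction

variable {E : Type*} [NormedAddCommGroup E] [InnerProductSpace ℝ E]

section Gradient

variable [CompleteSpace E] {f : E → ℝ}

theorem contDiffAt_gradient {n : WithTop ℕ∞} {x : E} (hf : ContDiffAt ℝ (n + 1) f x) :
    ContDiffAt ℝ n (∇ f) x :=
  (InnerProductSpace.toDual ℝ E).symm.toContinuousLinearEquiv.contDiff.contDiffAt.comp x
    (hf.fderiv_right le_rfl)

theorem inner_fderiv_gradient_apply {x : E} (hf : ContDiffAt ℝ 2 f x) (v w : E) :
    ⟪fderiv ℝ (∇ f) x v, w⟫ = fderiv ℝ (fderiv ℝ f) x v w := by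
  have hgrad : DifferentiableAt ℝ (∇ f) x :=
    (contDiffAt_gradient (n := 1) hf).differentiableAt one_ne_zero
  have hfderiv : DifferentiableAt ℝ (fderiv ℝ f) x :=
    (hf.fderiv_right (m := 1) le_rfl).differentiableAt one_ne_zero
  rw [real_inner_comm, inner_fderiv_apply_eq_fderiv_inner hgrad]
  simp only [inner_gradient_right, conj_trivial]
  rw [fderiv_clm_apply hfderiv (differentiableAt_const w)]
  simp

theorem isSymmetric_fderiv_gradient {x : E} (hf : ContDiffAt ℝ 2 f x) :
    (fderiv ℝ (∇ f) x : E →ₗ[ℝ] E).IsSymmetric := fun v w => by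
  have hsymm := hf.isSymmSndFDerivAt (by simp) v w
  rw [← inner_fderiv_gradient_apply hf, ← inner_fderiv_gradient_apply hf] at hsymm
  exact hsymm.trans (real_inner_comm _ _)

theorem hasDerivAt_comp_add_smul {x v : E} {t : ℝ} (hf : DifferentiableAt ℝ f (x + t • v)) :
    HasDerivAt (fun s : ℝ => f (x + s • v)) ⟪∇ f (x + t • v), v⟫ t := by
  have hline : HasDerivAt (fun s : ℝ => x + s • v) v t := by
    simpa using ((hasDerivAt_id t).smul_const v).const_add x
  rw [inner_gradient_left]
  exact hf.hasFDerivAt.comp_hasDerivAt t hline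

theorem inner_fderiv_gradient_apply_self_nonneg {x v : E} (hf : ContDiff ℝ 2 f)
    (hv : ⟪∇ f x, v⟫ = 0) (hmin : ∀ t : ℝ, f x ≤ f (x + t • v)) :
    0 ≤ ⟪fderiv ℝ (∇ f) x v, v⟫ := by
  set g : ℝ → ℝ := fun t => f (x + t • v) with hg
  have hg' : deriv g = fun t => ⟪∇ f (x + t • v), v⟫ := funext fun t =>
    (hasDerivAt_comp_add_smul (hf.differentiable two_ne_zero _)).deriv
  have hg'' : deriv (deriv g) 0 = ⟪fderiv ℝ (∇ f) x v, v⟫ := by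
    have hgrad : HasFDerivAt (∇ f) (fderiv ℝ (∇ f) x) (x + (0 : ℝ) • v) := by
      simpa using ((contDiffAt_gradient (n := 1) hf.contDiffAt).differentiableAt
        one_ne_zero).hasFDerivAt
    have hline : HasDerivAt (fun s : ℝ => x + s • v) v 0 := by
      simpa using ((hasDerivAt_id (0 : ℝ)).smul_const v).const_add x
    rw [hg']
    simpa using ((hgrad.comp_hasDerivAt 0 hline).inner ℝ (hasDerivAt_const (0 : ℝ) v)).deriv
  by_contra! hneg
  have hmax : IsLocalMax g 0 := isLocalMax_of_deriv_deriv_neg (hg''.trans_lt hneg)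
    (by simpa [hg'] using hv) (hf.continuous.comp (by fun_prop)).continuousAt
  have hconst : g =ᶠ[𝓝 0] fun _ => g 0 := hmax.mono fun t ht =>
    le_antisymm ht (by simpa [hg] using hmin t)
  have hzero : deriv (deriv g) 0 = 0 := by simpa using hconst.deriv.deriv_eq
  exact hneg.ne (hg''.symm.trans hzero)

end Gradient

/-- `f` is a `C²` defining function of `Ω`: `Ω = {f < 0}`, and `f` is regular on the boundary. -/
structure IsDefiningFunction (f : E → ℝ) (Ω : Set E) : Prop where
  contDiff : ContDiff ℝ 2 f
  eq_sublevel : Ω = {x | f x < 0}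
  fderiv_ne_zero : ∀ x ∈ frontier Ω, fderiv ℝ f x ≠ 0

namespace IsDefiningFunction

variable {f : E → ℝ} {Ω : Set E} {x : E}

theorem mem_iff (h : IsDefiningFunction f Ω) : x ∈ Ω ↔ f x < 0 := by
  rw [h.eq_sublevel, mem_ofPred_eq]

theorem isOpen (h : IsDefiningFunction f Ω) : IsOpen Ω :=
  h.eq_sublevel ▸ isOpen_lt h.contDiff.continuous continuous_const

theorem apply_eq_zero (h : IsDefiningFunction f Ω) (hx : x ∈ frontier Ω) : f x = 0 := by
  obtain ⟨hf, rfl, -⟩ := h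
  exact frontier_lt_subset_eq hf.continuous continuous_const hx

theorem mem_frontier_of_nonneg (h : IsDefiningFunction f Ω) (hx : x ∈ closure Ω)
    (hfx : 0 ≤ f x) : x ∈ frontier Ω := by
  rw [h.isOpen.frontier_eq]
  exact ⟨hx, fun hxΩ => (h.mem_iff.1 hxΩ).not_ge hfx⟩

theorem apply_nonpos (h : IsDefiningFunction f Ω) (hx : x ∈ closure Ω) : f x ≤ 0 := by
  by_contra! hfx
  exact hfx.ne' (h.apply_eq_zero (h.mem_frontier_of_nonneg hx hfx.le))

variable [CompleteSpace E]

theorem gradient_ne_zero (h : IsDefiningFunction f Ω) (hx : x ∈ frontier Ω) : ∇ f x ≠ 0 :=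
  (map_ne_zero_iff (InnerProductSpace.toDual ℝ E).symm (LinearIsometryEquiv.injective _)).2
    (h.fderiv_ne_zero x hx)

theorem contDiff_gradient (h : IsDefiningFunction f Ω) : ContDiff ℝ 1 (∇ f) :=
  contDiff_iff_contDiffAt.2 fun _ => contDiffAt_gradient h.contDiff.contDiffAt

theorem eventually_add_smul_mem (h : IsDefiningFunction f Ω) {d : E} (hx : x ∈ frontier Ω)
    (hd : ⟪∇ f x, d⟫ < 0) : ∀ᶠ t in 𝓝[>] (0 : ℝ), x + t • d ∈ Ω := by
  have hderiv := hasDerivAt_comp_add_smul (x := x) (v := d) (t := 0)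
    (h.contDiff.differentiable two_ne_zero _)
  rw [zero_smul, add_zero] at hderiv
  filter_upwards [(hderiv.hasDerivWithinAt (s := Ioi 0)).limsup_slope_le' (by simp) hd,
    self_mem_nhdsWithin] with t ht ht₀
  rw [slope_def_field, zero_smul, add_zero, h.apply_eq_zero hx, sub_zero, sub_zero,
    div_lt_iff₀ ht₀, zero_mul] at ht
  exact h.mem_iff.2 ht

theorem inner_gradient_sub_neg (h : IsDefiningFunction f Ω) (hΩ : Convex ℝ Ω)
    (hx : x ∈ frontier Ω) {y : E} (hy : y ∈ Ω) : ⟪∇ f x, y - x⟫ < 0 := by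
  have nonpos : ∀ z ∈ Ω, ⟪∇ f x, z - x⟫ ≤ 0 := fun z hz => by
    have hmax : IsLocalMaxOn f (closure Ω) x := eventually_mem_nhdsWithin.mono fun z hz =>
      (h.apply_nonpos hz).trans (h.apply_eq_zero hx).ge
    rw [inner_gradient_left]
    exact hmax.hasFDerivWithinAt_nonpos
      (h.contDiff.differentiable two_ne_zero x).hasFDerivAt.hasFDerivWithinAt
      (sub_mem_posTangentConeAt_of_segment_subset
        (hΩ.closure.segment_subset (frontier_subset_closure hx) (subset_closure hz)))
  have hline : ContinuousAt (fun t : ℝ => y + t • ∇ f x) 0 := by fun_prop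
  obtain ⟨t, ht, ht₀⟩ := (((hline.eventually_mem (by simpa using h.isOpen.mem_nhds hy)).filter_mono
    nhdsWithin_le_nhds).and (self_mem_nhdsWithin (s := Ioi (0 : ℝ)))).exists
  have hle := nonpos _ ht
  rw [add_sub_right_comm, inner_add_right, real_inner_smul_right] at hle
  linarith [mul_pos (show 0 < t from ht₀) (real_inner_self_pos.2 (h.gradient_ne_zero hx))]

theorem add_notMem_of_inner_eq_zero (h : IsDefiningFunction f Ω) (hΩ : Convex ℝ Ω)
    (hx : x ∈ frontier Ω) {v : E} (hv : ⟪∇ f x, v⟫ = 0) : x + v ∉ Ω := fun hmem => by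
  have := h.inner_gradient_sub_neg hΩ hx hmem
  rw [add_sub_cancel_left, hv] at this
  exact this.false

theorem inner_fderiv_gradient_apply_self_nonneg (h : IsDefiningFunction f Ω) (hΩ : Convex ℝ Ω)
    (hx : x ∈ frontier Ω) {v : E} (hv : ⟪∇ f x, v⟫ = 0) : 0 ≤ ⟪fderiv ℝ (∇ f) x v, v⟫ := by
  refine _root_.inner_fderiv_gradient_apply_self_nonneg h.contDiff hv fun t => ?_
  rw [h.apply_eq_zero hx, ← not_lt, ← h.mem_iff]
  exact h.add_notMem_of_inner_eq_zero hΩ hx (by rw [real_inner_smul_right, hv, mul_zero])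

theorem exists_smul_sub_smul_gradient_mem_frontier (h : IsDefiningFunction f Ω)
    (hΩ : Convex ℝ Ω) (hx : x ∈ frontier Ω) {v : E} (hv : ⟪∇ f x, v⟫ = 0) {ε : ℝ} (hε : 0 < ε) :
    ∃ t ∈ Ioo 0 ε, ∃ s ∈ Icc 0 ε, x + t • (v - s • ∇ f x) ∈ frontier Ω := by
  have hinward : ⟪∇ f x, v - ε • ∇ f x⟫ < 0 := by
    rw [inner_sub_right, hv, real_inner_smul_right, zero_sub, neg_neg_iff_pos]
    exact mul_pos hε (real_inner_self_pos.2 (h.gradient_ne_zero hx))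
  obtain ⟨t, ht_mem, ht⟩ := ((h.eventually_add_smul_mem hx hinward).and
    (Ioo_mem_nhdsGT hε)).exists
  refine ⟨t, ht, ?_⟩
  by_contra! hfrontier
  set S : Set E := (fun s : ℝ => x + t • (v - s • ∇ f x)) '' Icc 0 ε
  have hS : IsPreconnected S := isPreconnected_Icc.image _ (by fun_prop)
  have hSΩ : S ⊆ Ω := by
    refine hS.subset_of_closure_inter_subset h.isOpen
      ⟨_, mem_image_of_mem _ (right_mem_Icc.2 hε.le), ht_mem⟩ ?_
    rintro _ ⟨hy, s, hs, rfl⟩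
    by_contra hyΩ
    exact hfrontier s hs (h.isOpen.frontier_eq ▸ ⟨hy, hyΩ⟩)
  have hmem : x + t • v ∈ Ω := hSΩ ⟨0, left_mem_Icc.2 hε.le, by simp⟩
  exact h.add_notMem_of_inner_eq_zero hΩ hx (by rw [real_inner_smul_right, hv, mul_zero]) hmem

theorem mem_tangentConeAt_frontier (h : IsDefiningFunction f Ω) (hΩ : Convex ℝ Ω)
    (hx : x ∈ frontier Ω) {v : E} (hv : ⟪∇ f x, v⟫ = 0) :
    v ∈ tangentConeAt ℝ (frontier Ω) x := by
  choose t ht s hs hmem using fun k : ℕ =>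
    h.exists_smul_sub_smul_gradient_mem_frontier hΩ hx hv (Nat.one_div_pos_of_nat (α := ℝ) (n := k))
  have ht_lim : Tendsto t atTop (𝓝 0) := squeeze_zero (fun k => (ht k).1.le)
    (fun k => (ht k).2.le) tendsto_one_div_add_atTop_nhds_zero_nat
  have hs_lim : Tendsto s atTop (𝓝 0) := squeeze_zero (fun k => (hs k).1)
    (fun k => (hs k).2) tendsto_one_div_add_atTop_nhds_zero_nat
  have hdir : Tendsto (fun k => v - s k • ∇ f x) atTop (𝓝 v) := by
    simpa using tendsto_const_nhds.sub (hs_lim.smul_const (∇ f x))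
  refine mem_tangentConeAt_of_seq atTop (fun k => (t k)⁻¹) _ ?_ (Eventually.of_forall hmem) ?_
  · simpa using ht_lim.smul hdir
  · exact hdir.congr fun k => (inv_smul_smul₀ (ht k).1.ne' _).symm

theorem norm_gradient_smul_eq_gradient (h : IsDefiningFunction f Ω) (hx : x ∈ frontier Ω) {v : E}
    (hv : ‖v‖ = 1) (hvΩ : ∀ y ∈ Ω, ⟪v, y - x⟫ ≤ 0) : ‖∇ f x‖ • v = ∇ f x := by
  have hneg : ∀ d, ⟪∇ f x, d⟫ < 0 → ⟪v, d⟫ ≤ 0 := fun d hd => by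
    obtain ⟨t, ht, ht₀⟩ := ((h.eventually_add_smul_mem hx hd).and self_mem_nhdsWithin).exists
    have := hvΩ _ ht
    rw [add_sub_cancel_left, real_inner_smul_right] at this
    exact nonpos_of_mul_nonpos_right this ht₀
  have hFF : 0 < ⟪∇ f x, ∇ f x⟫ := real_inner_self_pos.2 (h.gradient_ne_zero hx)
  have htangent : tangentialPart (∇ f x) v = 0 := by
    have hlim : Tendsto (fun s : ℝ => ⟪v, tangentialPart (∇ f x) v - s • ∇ f x⟫) (𝓝[>] 0)
        (𝓝 ⟪v, tangentialPart (∇ f x) v⟫) := by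
      have : Continuous fun s : ℝ => ⟪v, tangentialPart (∇ f x) v - s • ∇ f x⟫ := by fun_prop
      simpa using (this.tendsto 0).mono_left nhdsWithin_le_nhds
    have hle := le_of_tendsto hlim (eventually_mem_nhdsWithin.mono fun s hs => hneg _ (by
      rw [inner_sub_right, inner_tangentialPart_right, real_inner_smul_right, zero_sub,
        neg_neg_iff_pos]
      exact mul_pos hs hFF))
    rwa [inner_tangentialPart_left, real_inner_self_nonpos] at hle
  have hnonneg : 0 ≤ ⟪∇ f x, v⟫ := by
    have := hneg (-∇ f x) (by rwa [inner_neg_right, neg_neg_iff_pos])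
    rwa [inner_neg_right, neg_nonpos, real_inner_comm] at this
  have hv_eq : v = (⟪∇ f x, v⟫ / ⟪∇ f x, ∇ f x⟫) • ∇ f x := sub_eq_zero.1 htangent
  have hsame : SameRay ℝ v (∇ f x) := by
    rw [hv_eq]
    exact SameRay.sameRay_nonneg_smul_left _ (div_nonneg hnonneg hFF.le)
  rw [← sameRay_iff_norm_smul_eq.1 hsame, hv, one_smul]

end IsDefiningFunction

end DefiningFunction

section BoundaryCondition

variable {E : Type*} [NormedAddCommGroup E] [InnerProductSpace ℝ E]

theorem norm_mul_fderiv_norm_apply {F : E → E} {x : E} (hF : DifferentiableAt ℝ F x)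
    (hFx : F x ≠ 0) (v : E) :
    ‖F x‖ * fderiv ℝ (fun y => ‖F y‖) x v = ⟪F x, fderiv ℝ F x v⟫ := by
  have hnorm := (hF.norm ℝ hFx).hasFDerivAt
  have heq : fderiv ℝ (fun y => ⟪F y, F y⟫) x v = fderiv ℝ (fun y => ‖F y‖ * ‖F y‖) x v := by
    simp only [real_inner_self_eq_norm_mul_norm]
  rw [fderiv_inner_apply ℝ hF hF, (hnorm.fun_mul hnorm).fderiv,
    real_inner_comm (F x) (fderiv ℝ F x v)] at heq
  simp only [_root_.add_apply, _root_.smul_apply, smul_eq_mul] at heq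
  linarith

variable [CompleteSpace E]

theorem contDiffOn_gradientWithin {s : Set E} {u : E → ℝ} {n : WithTop ℕ∞} (hs : UniqueDiffOn ℝ s)
    (hu : ContDiffOn ℝ (n + 1) u s) : ContDiffOn ℝ n (gradientWithin u s) s :=
  (InnerProductSpace.toDual ℝ E).symm.toContinuousLinearEquiv.contDiff.comp_contDiffOn
    (hu.fderivWithin hs le_rfl)

namespace IsDefiningFunction

variable {f u : E → ℝ} {Ω : Set E} {x : E}

theorem hasFDerivWithinAt_apply_eq_zero (h : IsDefiningFunction f Ω) (hΩ : Convex ℝ Ω)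
    (hx : x ∈ frontier Ω) {g : E → ℝ} {g' : E →L[ℝ] ℝ}
    (hg : HasFDerivWithinAt g g' (closure Ω) x) (hg₀ : ∀ᶠ y in 𝓝[frontier Ω] x, g y = 0) {v : E}
    (hv : ⟪∇ f x, v⟫ = 0) : g' v = 0 := by
  have hzero : HasFDerivWithinAt g (0 : E →L[ℝ] ℝ) (frontier Ω) x :=
    (hasFDerivWithinAt_const 0 x _).congr_of_eventuallyEq hg₀ (hg₀.self_of_nhdsWithin hx)
  exact (hg.mono frontier_subset_closure).unique_on hzero
    (h.mem_tangentConeAt_frontier hΩ hx hv)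

theorem tangentialPart_gradientWithin_eq_zero (h : IsDefiningFunction f Ω) (hΩ : Convex ℝ Ω)
    (hx : x ∈ frontier Ω) (hu : DifferentiableWithinAt ℝ u (closure Ω) x)
    (hu₀ : ∀ᶠ y in 𝓝[frontier Ω] x, u y = 0) :
    tangentialPart (∇ f x) (gradientWithin u (closure Ω) x) = 0 := by
  rw [← inner_self_eq_zero (𝕜 := ℝ), ← inner_tangentialPart_left, inner_gradientWithin_left]
  exact h.hasFDerivWithinAt_apply_eq_zero hΩ hx hu.hasFDerivWithinAt hu₀
    (inner_tangentialPart_right _ _)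

theorem inner_tangentialPart_add_inner_of_robin (h : IsDefiningFunction f Ω) (hΩ : Convex ℝ Ω)
    (hx : x ∈ frontier Ω) (hu : DifferentiableWithinAt ℝ u (closure Ω) x)
    (hU : DifferentiableWithinAt ℝ (gradientWithin u (closure Ω)) (closure Ω) x)
    {β : ℝ} (hbc : ∀ᶠ y in 𝓝[frontier Ω] x,
      ⟪∇ f y, gradientWithin u (closure Ω) y⟫ + β * (‖∇ f y‖ * u y) = 0) :
    let v := gradientWithin u (closure Ω) x
    let A := fderivWithin ℝ (gradientWithin u (closure Ω)) (closure Ω) x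
    let t := tangentialPart (∇ f x) v
    ⟪fderiv ℝ (∇ f) x t, v⟫ + ⟪∇ f x, A t⟫
      = ⟪∇ f x, v⟫ / ⟪∇ f x, ∇ f x⟫ * ⟪fderiv ℝ (∇ f) x t, ∇ f x⟫ - β * ‖∇ f x‖ * ⟪t, t⟫ := by
  intro v A t
  have hF : DifferentiableAt ℝ (∇ f) x := h.contDiff_gradient.differentiable one_ne_zero x
  have hFx := h.gradient_ne_zero hx
  have hnorm := (hF.norm ℝ hFx).hasFDerivAt.hasFDerivWithinAt (s := closure Ω)
  have hderiv := h.hasFDerivWithinAt_apply_eq_zero hΩ hx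
    ((hF.hasFDerivAt.hasFDerivWithinAt.inner ℝ hU.hasFDerivWithinAt).fun_add
      ((hnorm.fun_mul hu.hasFDerivWithinAt).const_mul β)) hbc (inner_tangentialPart_right _ v)
  have hut : fderivWithin ℝ u (closure Ω) x t = ⟪t, t⟫ := by
    rw [← inner_gradientWithin_left, inner_tangentialPart_left]
  have hFt := norm_mul_fderiv_norm_apply hF hFx t
  have hvalue := hbc.self_of_nhdsWithin hx
  change ⟪∇ f x, A t⟫ + ⟪fderiv ℝ (∇ f) x t, v⟫
    + β * (‖∇ f x‖ * fderivWithin ℝ u (closure Ω) x t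
      + u x * fderiv ℝ (fun y => ‖∇ f y‖) x t) = 0 at hderiv
  rw [hut] at hderiv
  rw [real_inner_comm] at hFt
  have hF₀ : ‖∇ f x‖ ≠ 0 := norm_ne_zero_iff.2 hFx
  rw [← hFt, real_inner_self_eq_norm_sq]
  field_simp
  linear_combination ‖∇ f x‖ * hderiv - fderiv ℝ (fun y => ‖∇ f y‖) x t * hvalue

end IsDefiningFunction

end BoundaryCondition

theorem IsDefiningFunction.reillyDensity_nonneg {E : Type*} [NormedAddCommGroup E]
    [InnerProductSpace ℝ E] [FiniteDimensional ℝ E] {f u : E → ℝ} {Ω : Set E} {x : E}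
    (h : IsDefiningFunction f Ω) (hΩ : Convex ℝ Ω) (hx : x ∈ frontier Ω)
    (hu : DifferentiableOn ℝ u (closure Ω))
    (hU : DifferentiableOn ℝ (gradientWithin u (closure Ω)) (closure Ω)) {β : ℝ} (hβ : 0 ≤ β)
    (hbc : ∀ y ∈ frontier Ω,
      ⟪∇ f y, gradientWithin u (closure Ω) y⟫ + β * (‖∇ f y‖ * u y) = 0 ∨ u y = 0) :
    0 ≤ reillyDensity (∇ f x) (fderiv ℝ (∇ f) x) (gradientWithin u (closure Ω) x)
      (fderivWithin ℝ (gradientWithin u (closure Ω)) (closure Ω) x) := by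
  have hsub : frontier Ω ⊆ closure Ω := frontier_subset_closure
  have hF := h.contDiff_gradient.continuous.continuousOn (s := frontier Ω)
  have hUc := hU.continuousOn.mono hsub
  set Q : E → ℝ := fun y => ⟪∇ f y, gradientWithin u (closure Ω) y⟫ + β * (‖∇ f y‖ * u y)
  have hQ : ContinuousOn Q (frontier Ω) := (hF.inner hUc).add
    (continuousOn_const.mul (hF.norm.mul (hu.continuousOn.mono hsub)))
  refine _root_.reillyDensity_nonneg (isSymmetric_fderiv_gradient h.contDiff.contDiffAt)
    (fun z hz => h.inner_fderiv_gradient_apply_self_nonneg hΩ hx hz) ?_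
  by_cases hrobin : ∀ᶠ y in 𝓝[frontier Ω] x, Q y = 0
  · rw [h.inner_tangentialPart_add_inner_of_robin hΩ hx (hu x (hsub hx)) (hU x (hsub hx)) hrobin]
    exact sub_le_self _ (mul_nonneg (mul_nonneg hβ (norm_nonneg _)) real_inner_self_nonneg)
  -- Arbitrarily close to `x` there are boundary points around which `u` vanishes; the tangential
  -- gradient is zero at these points, hence also at `x`.
  · have hfreq : ∃ᶠ y in 𝓝[frontier Ω] x, y ∈ frontier Ω ∧ Q y ≠ 0 :=
      (not_eventually.1 hrobin).and_eventually self_mem_nhdsWithin |>.mono fun y hy => hy.symm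
    have hdirichlet : ∃ᶠ y in 𝓝[frontier Ω] x,
        tangentialPart (∇ f y) (gradientWithin u (closure Ω) y) ∈ ({0} : Set E) :=
      hfreq.mono fun y ⟨hy, hQy⟩ =>
        h.tangentialPart_gradientWithin_eq_zero hΩ hy (hu y (hsub hy)) <| by
          filter_upwards [(hQ y hy).eventually_ne hQy, self_mem_nhdsWithin] with z hQz hz
          exact (hbc z hz).resolve_left hQz
    have hT := continuousOn_tangentialPart hF hUc fun y hy => h.gradient_ne_zero hy
    have htangent : tangentialPart (∇ f x) (gradientWithin u (closure Ω) x) = 0 :=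
      isClosed_singleton.mem_of_frequently_of_tendsto hdirichlet (hT x hx)
    simp [htangent]

section CutoffProfile

/-- `θ` is a `C²` cutoff on the line, decreasing from `1` on `(-∞, a]` to `0` on `[b, ∞)`. Composed
with a defining function it gives a cutoff of the domain that is constant on level sets. -/
structure IsCutoffProfile (θ : ℝ → ℝ) (a b : ℝ) : Prop where
  contDiff : ContDiff ℝ 2 θ
  antitone : Antitone θ
  eq_one : ∀ t ≤ a, θ t = 1
  eq_zero : ∀ t ≥ b, θ t = 0

theorem exists_isCutoffProfile {a b : ℝ} (hab : a < b) : ∃ θ, IsCutoffProfile θ a b := by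
  have hba : 0 < b - a := sub_pos.2 hab
  refine ⟨fun t => Real.smoothTransition ((b - t) / (b - a)), ?_, fun s t hst => ?_,
    fun t ht => ?_, fun t ht => ?_⟩
  · exact (Real.smoothTransition.contDiff (n := 2)).comp
      ((contDiff_const.sub contDiff_id).div_const _)
  · exact Real.smoothTransition.monotone (by gcongr)
  · exact Real.smoothTransition.one_of_one_le ((one_le_div hba).2 (by linarith))
  · exact Real.smoothTransition.zero_of_nonpos
      (div_nonpos_of_nonpos_of_nonneg (sub_nonpos.2 ht) hba.le)

namespace IsCutoffProfile

variable {θ : ℝ → ℝ} {a b t : ℝ}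

theorem nonneg (h : IsCutoffProfile θ a b) : 0 ≤ θ t :=
  (h.eq_zero _ (le_max_right t b)).ge.trans (h.antitone (le_max_left t b))

theorem le_one (h : IsCutoffProfile θ a b) : θ t ≤ 1 :=
  (h.antitone (min_le_left t a)).trans (h.eq_one _ (min_le_right t a)).le

theorem contDiff_deriv (h : IsCutoffProfile θ a b) : ContDiff ℝ 1 (deriv θ) :=
  (contDiff_succ_iff_deriv (n := 1).1 h.contDiff).2.2

theorem deriv_nonpos (h : IsCutoffProfile θ a b) : deriv θ t ≤ 0 :=
  h.antitone.deriv_nonpos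

theorem deriv_eq_zero (h : IsCutoffProfile θ a b) (ht : t ∉ Icc a b) : deriv θ t = 0 := by
  rcases lt_or_ge t a with hta | hat
  · have hmax : IsLocalMax θ t := Eventually.of_forall fun s =>
      h.le_one.trans (h.eq_one t hta.le).ge
    exact hmax.deriv_eq_zero
  · have hmin : IsLocalMin θ t := Eventually.of_forall fun s =>
      (h.eq_zero t (not_le.1 fun htb => ht ⟨hat, htb⟩).le).trans_le h.nonneg
    exact hmin.deriv_eq_zero

end IsCutoffProfile

end CutoffProfile

section CutoffReilly

theorem integrable_mul_of_tsupport_subset {X : Type*} [TopologicalSpace X] [MeasurableSpace X]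
    [OpensMeasurableSpace X] {μ : Measure X} [IsFiniteMeasureOnCompacts μ] {ψ g : X → ℝ} {V : Set X}
    (hV : IsOpen V) (hψ : Continuous ψ) (hψc : HasCompactSupport ψ) (hψV : tsupport ψ ⊆ V)
    (hg : ContinuousOn g V) : Integrable (fun x => ψ x * g x) μ :=
  (continuous_of_tsupport fun _ hx => hψ.continuousAt.mul (hg.continuousAt
    (hV.mem_nhds (hψV (tsupport_mul_subset_left hx))))).integrable_of_hasCompactSupport
    hψc.mul_right

variable {E : Type*} [NormedAddCommGroup E] [InnerProductSpace ℝ E]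

theorem fderiv_comp_apply_eq_mul_inner_gradient [CompleteSpace E] {θ : ℝ → ℝ} {f : E → ℝ} {x : E}
    (hθ : DifferentiableAt ℝ θ (f x)) (hf : DifferentiableAt ℝ f x) (v : E) :
    fderiv ℝ (fun y => θ (f y)) x v = deriv θ (f x) * ⟪∇ f x, v⟫ := by
  rw [inner_gradient_left, ← smul_eq_mul, ← _root_.smul_apply]
  exact congrArg (· v) (hθ.hasDerivAt.comp_hasFDerivAt x hf.hasFDerivAt).fderiv

namespace IsDefiningFunction

variable {f : E → ℝ} {Ω : Set E} {θ : ℝ → ℝ} {a b : ℝ}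

theorem tsupport_cutoff_subset (h : IsDefiningFunction f Ω) (hb : b < 0)
    (hθ : IsCutoffProfile θ a b) : tsupport (fun x => θ (f x)) ⊆ Ω := by
  have hclosed : IsClosed {x | f x ≤ b} := isClosed_le h.contDiff.continuous continuous_const
  refine (closure_minimal (fun x hx => ?_) hclosed).trans
    fun x hx => h.mem_iff.2 (lt_of_le_of_lt hx hb)
  exact not_lt.1 fun hlt => hx (hθ.eq_zero _ hlt.le)

theorem tsupport_deriv_cutoff_subset (h : IsDefiningFunction f Ω)
    (hθ : IsCutoffProfile θ a b) : tsupport (fun x => deriv θ (f x)) ⊆ f ⁻¹' Icc a b :=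
  closure_minimal (fun _ hx => of_not_not fun hab => hx (hθ.deriv_eq_zero hab))
    (isClosed_Icc.preimage h.contDiff.continuous)

theorem setIntegral_nonneg_of_forall_cutoff [MeasurableSpace E] [OpensMeasurableSpace E]
    {μ : Measure E} (h : IsDefiningFunction f Ω) {g : E → ℝ} (hg : IntegrableOn g Ω μ) {c : ℝ}
    (hc : c < 0) (hcut : ∀ θ a b, IsCutoffProfile θ a b → c ≤ a → b < 0 →
      0 ≤ ∫ x, θ (f x) * g x ∂μ) : 0 ≤ ∫ x in Ω, g x ∂μ := by
  let a (k : ℕ) : ℝ := c * (1 / ((k : ℝ) + 1))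
  have a_neg (k) : a k < 0 := mul_neg_of_neg_of_pos hc Nat.one_div_pos_of_nat
  have c_le_a (k) : c ≤ a k := by
    have hk : 1 / ((k : ℝ) + 1) ≤ 1 := (div_le_one₀ k.cast_add_one_pos).2 (by simp)
    nlinarith
  have a_tendsto : Tendsto a atTop (𝓝 0) := by
    simpa only [mul_zero] using tendsto_one_div_add_atTop_nhds_zero_nat.const_mul c
  choose θ hθ using fun k => exists_isCutoffProfile (show a k < a k / 2 by linarith [a_neg k])
  have hg' : Integrable (Ω.indicator g) μ := (integrable_indicator_iff h.isOpen.measurableSet).2 hg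
  have cutoff_mul (k x) : θ k (f x) * g x = θ k (f x) * Ω.indicator g x := by
    by_cases hx : x ∈ Ω
    · rw [indicator_of_mem hx]
    · have hfx : a k / 2 ≤ f x := by
        linarith [a_neg k, not_lt.1 (h.mem_iff.not.1 hx)]
      rw [(hθ k).eq_zero _ hfx, zero_mul, zero_mul]
  have hlim : Tendsto (fun k => ∫ x, θ k (f x) * g x ∂μ) atTop (𝓝 (∫ x in Ω, g x ∂μ)) := by
    rw [← integral_indicator h.isOpen.measurableSet]
    simp_rw [cutoff_mul]
    refine tendsto_integral_of_dominated_convergence (fun x => ‖Ω.indicator g x‖)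
      (fun k => ((hθ k).contDiff.continuous.comp
        h.contDiff.continuous).aestronglyMeasurable.mul hg'.aestronglyMeasurable) hg'.norm
      (fun k => .of_forall fun x => ?_) (.of_forall fun x => ?_)
    · rw [norm_mul, Real.norm_of_nonneg (hθ k).nonneg]
      exact mul_le_of_le_one_left (norm_nonneg _) (hθ k).le_one
    · by_cases hx : x ∈ Ω
      · refine tendsto_const_nhds.congr' ?_
        filter_upwards [a_tendsto.eventually_const_le (h.mem_iff.1 hx)] with k hk
        rw [(hθ k).eq_one _ hk, one_mul]
      · simp [indicator_of_notMem hx]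
  exact ge_of_tendsto' hlim fun k =>
    hcut _ _ _ (hθ k) (c_le_a k) (by linarith [a_neg k])

variable [FiniteDimensional ℝ E]

theorem isCompact_setOf_le (h : IsDefiningFunction f Ω) (hΩ : Bornology.IsBounded Ω)
    (hb : b < 0) : IsCompact {x | f x ≤ b} :=
  isCompact_of_isClosed_isBounded (isClosed_le h.contDiff.continuous continuous_const)
    (hΩ.subset fun _ hx => h.mem_iff.2 (lt_of_le_of_lt hx hb))

theorem hasCompactSupport_cutoff (h : IsDefiningFunction f Ω) (hΩ : Bornology.IsBounded Ω)
    (hb : b < 0) (hθ : IsCutoffProfile θ a b) : HasCompactSupport (fun x => θ (f x)) :=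
  .intro (h.isCompact_setOf_le hΩ hb) fun _ hx => hθ.eq_zero _ (not_le.1 hx).le

theorem hasCompactSupport_deriv_cutoff (h : IsDefiningFunction f Ω) (hΩ : Bornology.IsBounded Ω)
    (hb : b < 0) (hθ : IsCutoffProfile θ a b) : HasCompactSupport (fun x => deriv θ (f x)) :=
  .intro (h.isCompact_setOf_le hΩ hb) fun _ hx => hθ.deriv_eq_zero fun hab => hx hab.2

variable [MeasurableSpace E] [BorelSpace E] {μ : Measure E}

theorem integrable_cutoff_mul [IsFiniteMeasureOnCompacts μ] (h : IsDefiningFunction f Ω)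
    (hΩ : Bornology.IsBounded Ω) (hb : b < 0) (hθ : IsCutoffProfile θ a b) {g : E → ℝ}
    (hg : ContinuousOn g Ω) : Integrable (fun x => θ (f x) * g x) μ :=
  integrable_mul_of_tsupport_subset h.isOpen
    (hθ.contDiff.continuous.comp h.contDiff.continuous) (h.hasCompactSupport_cutoff hΩ hb hθ)
    (h.tsupport_cutoff_subset hb hθ) hg

theorem integrable_deriv_cutoff_mul [IsFiniteMeasureOnCompacts μ] (h : IsDefiningFunction f Ω)
    (hΩ : Bornology.IsBounded Ω) (hb : b < 0) (hθ : IsCutoffProfile θ a b) {V : Set E}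
    (hV : IsOpen V) (habV : f ⁻¹' Icc a b ⊆ V) {g : E → ℝ} (hg : ContinuousOn g V) :
    Integrable (fun x => deriv θ (f x) * g x) μ :=
  integrable_mul_of_tsupport_subset hV (hθ.contDiff_deriv.continuous.comp h.contDiff.continuous)
    (h.hasCompactSupport_deriv_cutoff hΩ hb hθ)
    ((h.tsupport_deriv_cutoff_subset hθ).trans habV) hg

theorem integral_cutoff_mul_traceCLM_hessian [μ.IsAddHaarMeasure] (h : IsDefiningFunction f Ω)
    (hΩ : Bornology.IsBounded Ω) (hb : b < 0) (hθ : IsCutoffProfile θ a b) :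
    ∫ x, θ (f x) * traceCLM (fderiv ℝ (∇ f) x) ∂μ = ∫ x, -deriv θ (f x) * ⟪∇ f x, ∇ f x⟫ ∂μ := by
  have hf : ContDiff ℝ 1 f := h.contDiff.of_le one_le_two
  have hF := h.contDiff_gradient
  have hθf : ContDiff ℝ 1 fun x => θ (f x) := (hθ.contDiff.of_le one_le_two).comp hf
  have hdiv := integral_cutoff_div_eq_zero (μ := μ) isOpen_univ hθf
    (h.hasCompactSupport_cutoff hΩ hb hθ) (subset_univ _) hF.contDiffOn
  simp only [fderiv_comp_apply_eq_mul_inner_gradient (hθ.contDiff.differentiable two_ne_zero _)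
    (hf.differentiable one_ne_zero _)] at hdiv
  rw [integral_add] at hdiv
  · simp only [neg_mul, integral_neg]
    linarith
  · exact h.integrable_cutoff_mul hΩ hb hθ
      (traceCLM.continuous.comp (hF.continuous_fderiv one_ne_zero)).continuousOn
  · exact h.integrable_deriv_cutoff_mul hΩ hb hθ isOpen_univ (subset_univ _)
      (hF.continuous.inner hF.continuous).continuousOn

theorem integral_deriv_cutoff_mul_sub_reillyDensity_eq_zero [μ.IsAddHaarMeasure]
    (h : IsDefiningFunction f Ω) (hΩ : Bornology.IsBounded Ω) (hb : b < 0)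
    (hθ : IsCutoffProfile θ a b) {V : Set E} (hV : IsOpen V) (hV₀ : ∀ x ∈ V, ∇ f x ≠ 0)
    (habV : f ⁻¹' Icc a b ⊆ V) {U : E → E} (hU : ContDiffOn ℝ 1 U V) :
    ∫ x, deriv θ (f x) * (⟪∇ f x, U x⟫ * traceCLM (fderiv ℝ U x) - ⟪∇ f x, fderiv ℝ U x (U x)⟫
      - reillyDensity (∇ f x) (fderiv ℝ (∇ f) x) (U x) (fderiv ℝ U x)) ∂μ = 0 := by
  have hf : ContDiff ℝ 1 f := h.contDiff.of_le one_le_two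
  have hUx (x) (hx : x ∈ V) : ContDiffAt ℝ 1 U x := hU.contDiffAt (hV.mem_nhds hx)
  have hY : ContDiffOn ℝ 1 (fun x => ⟪∇ f x, U x⟫ • tangentialPart (∇ f x) (U x)) V := fun x hx =>
    ((h.contDiff_gradient.contDiffAt.inner ℝ (hUx x hx)).smul (contDiffAt_tangentialPart
      h.contDiff_gradient.contDiffAt (hUx x hx) (hV₀ x hx))).contDiffWithinAt
  rw [← integral_cutoff_div_eq_zero (μ := μ) hV (hθ.contDiff_deriv.comp hf)
    (h.hasCompactSupport_deriv_cutoff hΩ hb hθ)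
    ((h.tsupport_deriv_cutoff_subset hθ).trans habV) hY]
  refine integral_congr_ae (.of_forall fun x => ?_)
  have cutoff_tangent : fderiv ℝ (deriv θ ∘ f) x
      (⟪∇ f x, U x⟫ • tangentialPart (∇ f x) (U x)) = 0 := by
    rw [map_smul]
    refine smul_eq_zero_of_right _ ((fderiv_comp_apply_eq_mul_inner_gradient
      (hθ.contDiff_deriv.differentiable one_ne_zero _)
      (hf.differentiable one_ne_zero _) _).trans ?_)
    rw [inner_tangentialPart_right, mul_zero]
  simp only [cutoff_tangent, add_zero, Function.comp_apply]
  by_cases hx : x ∈ V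
  · rw [traceCLM_fderiv_inner_smul_tangentialPart (h.contDiff_gradient.differentiable one_ne_zero x)
      ((hUx x hx).differentiableAt one_ne_zero) (hV₀ x hx)]
  · rw [hθ.deriv_eq_zero fun hab => hx (habV hab), zero_mul, zero_mul]

theorem integrable_deriv_cutoff_mul_reillyDensity [IsFiniteMeasureOnCompacts μ]
    (h : IsDefiningFunction f Ω) (hΩ : Bornology.IsBounded Ω) (hb : b < 0)
    (hθ : IsCutoffProfile θ a b) (hf₀ : ∀ x, f x ∈ Icc a b → ∇ f x ≠ 0) {U : E → E}
    (hU : ContDiffOn ℝ 1 U Ω) :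
    Integrable (fun x => deriv θ (f x)
      * reillyDensity (∇ f x) (fderiv ℝ (∇ f) x) (U x) (fderiv ℝ U x)) μ := by
  have hF := h.contDiff_gradient
  have hV : IsOpen (Ω ∩ {x | ∇ f x ≠ 0}) := h.isOpen.inter (isOpen_ne.preimage hF.continuous)
  refine h.integrable_deriv_cutoff_mul hΩ hb hθ hV
    (fun x hx => ⟨h.mem_iff.2 (hx.2.trans_lt hb), hf₀ x hx⟩) ?_
  exact continuousOn_reillyDensity hF.continuous.continuousOn
    (hF.continuous_fderiv one_ne_zero).continuousOn (hU.continuousOn.mono inter_subset_left)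
    ((hU.continuousOn_fderiv_of_isOpen h.isOpen le_rfl).mono inter_subset_left) fun x hx => hx.2

theorem integral_cutoff_mul_bochner [μ.IsAddHaarMeasure] (h : IsDefiningFunction f Ω)
    (hΩ : Bornology.IsBounded Ω) (hb : b < 0) (hθ : IsCutoffProfile θ a b)
    (hf₀ : ∀ x, f x ∈ Icc a b → ∇ f x ≠ 0) {U : E → E} (hU : ContDiffOn ℝ 1 U Ω) :
    ∫ x, θ (f x) * (traceCLM (fderiv ℝ U x) ^ 2 - traceCLM (fderiv ℝ U x ∘L fderiv ℝ U x)) ∂μ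
      = ∫ x, -deriv θ (f x)
        * reillyDensity (∇ f x) (fderiv ℝ (∇ f) x) (U x) (fderiv ℝ U x) ∂μ := by
  have hf : ContDiff ℝ 1 f := h.contDiff.of_le one_le_two
  have hF := h.contDiff_gradient
  have hθf : ContDiff ℝ 1 fun x => θ (f x) := (hθ.contDiff.of_le one_le_two).comp hf
  let V : Set E := Ω ∩ {x | ∇ f x ≠ 0}
  have hVΩ : V ⊆ Ω := inter_subset_left
  have hV : IsOpen V := h.isOpen.inter (isOpen_ne.preimage hF.continuous)
  have habV : f ⁻¹' Icc a b ⊆ V := fun x hx => ⟨h.mem_iff.2 (hx.2.trans_lt hb), hf₀ x hx⟩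
  have hA : ContinuousOn (fderiv ℝ U) Ω := hU.continuousOn_fderiv_of_isOpen h.isOpen le_rfl
  have integrable_interior := h.integrable_cutoff_mul (μ := μ) hΩ hb hθ
    (continuousOn_traceCLM_sq_sub_traceCLM_comp hA)
  have integrable_flux : Integrable (fun x => deriv θ (f x)
      * (⟪∇ f x, U x⟫ * traceCLM (fderiv ℝ U x) - ⟪∇ f x, fderiv ℝ U x (U x)⟫)) μ :=
    h.integrable_deriv_cutoff_mul hΩ hb hθ h.isOpen (habV.trans hVΩ)
      (((hF.continuous.continuousOn.inner hU.continuousOn).mul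
        (traceCLM.continuous.comp_continuousOn hA)).sub
        (hF.continuous.continuousOn.inner (hA.clm_apply hU.continuousOn)))
  have integrable_density :=
    h.integrable_deriv_cutoff_mul_reillyDensity (μ := μ) hΩ hb hθ hf₀ hU
  have hbochner := integral_cutoff_bochner_eq_zero (μ := μ) h.isOpen hθf
    (h.hasCompactSupport_cutoff hΩ hb hθ) (h.tsupport_cutoff_subset hb hθ) hU
  have hflux := h.integral_deriv_cutoff_mul_sub_reillyDensity_eq_zero (μ := μ) hΩ hb hθ hV
    (fun x hx => hx.2) habV (hU.mono hVΩ)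
  simp only [fderiv_comp_apply_eq_mul_inner_gradient (hθ.contDiff.differentiable two_ne_zero _)
    (hf.differentiable one_ne_zero _), mul_assoc, ← mul_sub] at hbochner
  rw [integral_add integrable_interior integrable_flux] at hbochner
  simp only [mul_sub _ (_ - _)] at hflux
  rw [integral_sub integrable_flux integrable_density] at hflux
  simp only [neg_mul, integral_neg]
  linarith

end IsDefiningFunction

end CutoffReilly

section Reilly

theorem exists_neg_forall_pos_of_forall_nonneg_pos {X : Type*} [TopologicalSpace X] [T2Space X]
    {K : Set X} (hK : IsCompact K) {f g : X → ℝ} (hf : ContinuousOn f K) (hg : ContinuousOn g K)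
    (hpos : ∀ x ∈ K, 0 ≤ f x → 0 < g x) : ∃ c < 0, ∀ x ∈ K, c ≤ f x → 0 < g x := by
  have hC : IsCompact (K ∩ g ⁻¹' Iic 0) := hK.of_isClosed_subset
    (hg.preimage_isClosed_of_isClosed hK.isClosed isClosed_Iic) inter_subset_left
  rcases (K ∩ g ⁻¹' Iic 0).eq_empty_or_nonempty with hempty | hne
  · exact ⟨-1, by norm_num, fun x hx _ => not_le.1 fun hgx => hempty.subset ⟨hx, hgx⟩⟩
  · obtain ⟨z, hz, hmax⟩ := hC.exists_isMaxOn hne (hf.mono inter_subset_left)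
    have hfz : f z < 0 := not_le.1 fun h₀ => (hpos z hz.1 h₀).not_ge hz.2
    refine ⟨f z / 2, by linarith, fun x hx hfx => not_le.1 fun hgx => ?_⟩
    have hle : f x ≤ f z := hmax ⟨hx, hgx⟩
    linarith

variable {E : Type*} [NormedAddCommGroup E] [InnerProductSpace ℝ E] [FiniteDimensional ℝ E]
  {Ω : Set E} {U : E → E}

namespace IsDefiningFunction

variable {f : E → ℝ}

theorem exists_collar (h : IsDefiningFunction f Ω) (hΩ : Bornology.IsBounded Ω) {R : E → ℝ}
    (hR_cont : ContinuousOn R (closure Ω ∩ {x | ∇ f x ≠ 0})) (hR : ∀ x ∈ frontier Ω, 0 ≤ R x)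
    {ε : ℝ} (hε : 0 < ε) :
    ∃ c < 0, ∀ x ∈ closure Ω, c ≤ f x → ∇ f x ≠ 0 ∧ 0 < R x + ε * ⟪∇ f x, ∇ f x⟫ := by
  have hf := h.contDiff.continuous
  have hF := h.contDiff_gradient.continuous
  have hFF_pos {x} (hx : x ∈ closure Ω) (hfx : 0 ≤ f x) : 0 < ⟪∇ f x, ∇ f x⟫ :=
    real_inner_self_pos.2 (h.gradient_ne_zero (h.mem_frontier_of_nonneg hx hfx))
  obtain ⟨c₁, hc₁, hreg⟩ := exists_neg_forall_pos_of_forall_nonneg_pos hΩ.isCompact_closure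
    hf.continuousOn (hF.inner hF).continuousOn fun x hx hfx => hFF_pos hx hfx
  have hK : IsCompact (closure Ω ∩ {x | c₁ ≤ f x}) :=
    hΩ.isCompact_closure.inter_right (isClosed_le continuous_const hf)
  have hR_contK : ContinuousOn R (closure Ω ∩ {x | c₁ ≤ f x}) := hR_cont.mono fun x hx =>
    ⟨hx.1, real_inner_self_pos.1 (hreg x hx.1 hx.2)⟩
  obtain ⟨c₂, hc₂, hpos⟩ := exists_neg_forall_pos_of_forall_nonneg_pos hK hf.continuousOn
    (hR_contK.add ((hF.inner hF).const_smul ε).continuousOn)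
    fun x hx hfx => add_pos_of_nonneg_of_pos (hR x (h.mem_frontier_of_nonneg hx.1 hfx))
      (mul_pos hε (hFF_pos hx.1 hfx))
  refine ⟨max c₁ c₂, max_lt hc₁ hc₂, fun x hx hfx => ?_⟩
  have hc₁x : c₁ ≤ f x := (le_max_left _ _).trans hfx
  exact ⟨real_inner_self_pos.1 (hreg x hx hc₁x),
    hpos x ⟨hx, hc₁x⟩ ((le_max_right _ _).trans hfx)⟩

end IsDefiningFunction

variable [MeasurableSpace E] [BorelSpace E] {μ : Measure E}

theorem integrableOn_comp_fderiv [IsFiniteMeasureOnCompacts μ] (hΩo : IsOpen Ω)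
    (hΩ : Bornology.IsBounded Ω) (hΩu : UniqueDiffOn ℝ (closure Ω))
    (hU : ContDiffOn ℝ 1 U (closure Ω)) {φ : (E →L[ℝ] E) → ℝ} (hφ : Continuous φ) :
    IntegrableOn (fun x => φ (fderiv ℝ U x)) Ω μ := by
  have hint : IntegrableOn (fun x => φ (fderivWithin ℝ U (closure Ω) x)) Ω μ :=
    ((hφ.comp_continuousOn (hU.continuousOn_fderivWithin hΩu le_rfl)).integrableOn_compact
      hΩ.isCompact_closure).mono_set subset_closure
  refine hint.congr_fun (fun x hx => ?_) hΩo.measurableSet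
  simp only [fderivWithin_of_mem_nhds (mem_of_superset (hΩo.mem_nhds hx) subset_closure)]

namespace IsDefiningFunction

variable [μ.IsAddHaarMeasure] {f : E → ℝ}

theorem integral_cutoff_mul_bochner_add_hessian {θ : ℝ → ℝ} {a b : ℝ}
    (h : IsDefiningFunction f Ω) (hΩ : Bornology.IsBounded Ω) (hb : b < 0)
    (hθ : IsCutoffProfile θ a b) (hf₀ : ∀ x, f x ∈ Icc a b → ∇ f x ≠ 0)
    (hU : ContDiffOn ℝ 1 U Ω) (ε : ℝ) :
    ∫ x, θ (f x) * (traceCLM (fderiv ℝ U x) ^ 2 - traceCLM (fderiv ℝ U x ∘L fderiv ℝ U x)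
        + ε * traceCLM (fderiv ℝ (∇ f) x)) ∂μ
      = ∫ x, -deriv θ (f x) * (reillyDensity (∇ f x) (fderiv ℝ (∇ f) x) (U x) (fderiv ℝ U x)
        + ε * ⟪∇ f x, ∇ f x⟫) ∂μ := by
  have hF := h.contDiff_gradient
  have integrable_bochner := h.integrable_cutoff_mul (μ := μ) hΩ hb hθ
    (continuousOn_traceCLM_sq_sub_traceCLM_comp (hU.continuousOn_fderiv_of_isOpen h.isOpen le_rfl))
  have integrable_hessian : Integrable (fun x => θ (f x) * traceCLM (fderiv ℝ (∇ f) x)) μ :=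
    h.integrable_cutoff_mul hΩ hb hθ
      (traceCLM.continuous.comp (hF.continuous_fderiv one_ne_zero)).continuousOn
  have integrable_density :=
    h.integrable_deriv_cutoff_mul_reillyDensity (μ := μ) hΩ hb hθ hf₀ hU
  have integrable_gradient : Integrable (fun x => deriv θ (f x) * ⟪∇ f x, ∇ f x⟫) μ :=
    h.integrable_deriv_cutoff_mul hΩ hb hθ isOpen_univ (subset_univ _)
      (hF.continuous.inner hF.continuous).continuousOn
  have hbochner := h.integral_cutoff_mul_bochner (μ := μ) hΩ hb hθ hf₀ hU
  have hhessian := h.integral_cutoff_mul_traceCLM_hessian (μ := μ) hΩ hb hθ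
  simp only [neg_mul, integral_neg] at hbochner hhessian ⊢
  simp only [mul_add, mul_left_comm _ ε]
  rw [integral_add integrable_bochner (integrable_hessian.const_mul ε),
    integral_add integrable_density (integrable_gradient.const_mul ε), integral_const_mul,
    integral_const_mul, hbochner, hhessian]
  ring

/- The density `R` is known to be nonnegative only on the boundary itself, while the cutoff lives
inside `Ω`. Adding the divergence theorem for `ε • ∇ f` contributes `ε * |∇ f|²`, which absorbs the
negative part of `R` in a thin enough collar. -/
theorem setIntegral_bochner_add_hessian_nonneg (h : IsDefiningFunction f Ω)
    (hΩ : Bornology.IsBounded Ω) (hΩu : UniqueDiffOn ℝ (closure Ω))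
    (hU : ContDiffOn ℝ 1 U (closure Ω))
    (hR : ∀ x ∈ frontier Ω, 0 ≤ reillyDensity (∇ f x) (fderiv ℝ (∇ f) x) (U x)
      (fderivWithin ℝ U (closure Ω) x)) {ε : ℝ} (hε : 0 < ε) :
    0 ≤ ∫ x in Ω, (traceCLM (fderiv ℝ U x) ^ 2 - traceCLM (fderiv ℝ U x ∘L fderiv ℝ U x)
      + ε * traceCLM (fderiv ℝ (∇ f) x)) ∂μ := by
  have hF := h.contDiff_gradient
  have hR_cont := continuousOn_reillyDensity
    (s := closure Ω ∩ {x | ∇ f x ≠ 0}) hF.continuous.continuousOn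
    (hF.continuous_fderiv one_ne_zero).continuousOn (hU.continuousOn.mono inter_subset_left)
    ((hU.continuousOn_fderivWithin hΩu le_rfl).mono inter_subset_left) fun x hx => hx.2
  obtain ⟨c, hc, hcollar⟩ := h.exists_collar hΩ hR_cont hR hε
  have hint : IntegrableOn (fun x => traceCLM (fderiv ℝ U x) ^ 2
      - traceCLM (fderiv ℝ U x ∘L fderiv ℝ U x) + ε * traceCLM (fderiv ℝ (∇ f) x)) Ω μ :=
    (integrableOn_comp_fderiv h.isOpen hΩ hΩu hU ((traceCLM.continuous.pow 2).sub
      (traceCLM.continuous.comp (continuous_id.clm_comp continuous_id)))).add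
    (integrableOn_comp_fderiv h.isOpen hΩ hΩu hF.contDiffOn (traceCLM.continuous.const_smul ε))
  refine h.setIntegral_nonneg_of_forall_cutoff hint hc fun θ a b hθ hca hb => ?_
  have hΩ_of_mem {x} (hx : f x ∈ Icc a b) : x ∈ Ω := h.mem_iff.2 (hx.2.trans_lt hb)
  rw [h.integral_cutoff_mul_bochner_add_hessian hΩ hb hθ (fun x hx =>
    (hcollar x (subset_closure (hΩ_of_mem hx)) (hca.trans hx.1)).1) (hU.mono subset_closure)]
  refine integral_nonneg fun x => ?_
  by_cases hx : f x ∈ Icc a b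
  · have hxΩ := hΩ_of_mem hx
    have hpos := (hcollar x (subset_closure hxΩ) (hca.trans hx.1)).2
    rw [fderivWithin_of_mem_nhds (mem_of_superset (h.isOpen.mem_nhds hxΩ) subset_closure)] at hpos
    exact mul_nonneg (neg_nonneg.2 hθ.deriv_nonpos) hpos.le
  · simp [hθ.deriv_eq_zero hx]

theorem setIntegral_traceCLM_comp_le (h : IsDefiningFunction f Ω)
    (hΩ : Bornology.IsBounded Ω) (hΩu : UniqueDiffOn ℝ (closure Ω))
    (hU : ContDiffOn ℝ 1 U (closure Ω))
    (hR : ∀ x ∈ frontier Ω, 0 ≤ reillyDensity (∇ f x) (fderiv ℝ (∇ f) x) (U x)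
      (fderivWithin ℝ U (closure Ω) x)) :
    ∫ x in Ω, traceCLM (fderiv ℝ U x ∘L fderiv ℝ U x) ∂μ
      ≤ ∫ x in Ω, traceCLM (fderiv ℝ U x) ^ 2 ∂μ := by
  have integrable_sq : IntegrableOn (fun x => traceCLM (fderiv ℝ U x) ^ 2) Ω μ :=
    integrableOn_comp_fderiv h.isOpen hΩ hΩu hU (traceCLM.continuous.pow 2)
  have integrable_comp : IntegrableOn (fun x => traceCLM (fderiv ℝ U x ∘L fderiv ℝ U x)) Ω μ :=
    integrableOn_comp_fderiv h.isOpen hΩ hΩu hU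
      (traceCLM.continuous.comp (continuous_id.clm_comp continuous_id))
  have integrable_hessian : IntegrableOn (fun x => traceCLM (fderiv ℝ (∇ f) x)) Ω μ :=
    integrableOn_comp_fderiv h.isOpen hΩ hΩu h.contDiff_gradient.contDiffOn traceCLM.continuous
  let bound (ε : ℝ) : ℝ := (∫ x in Ω, traceCLM (fderiv ℝ U x) ^ 2 ∂μ)
    - (∫ x in Ω, traceCLM (fderiv ℝ U x ∘L fderiv ℝ U x) ∂μ)
    + ε * ∫ x in Ω, traceCLM (fderiv ℝ (∇ f) x) ∂μ
  have hbound (ε : ℝ) (hε : 0 < ε) : 0 ≤ bound ε := by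
    have hnonneg := h.setIntegral_bochner_add_hessian_nonneg (μ := μ) hΩ hΩu hU hR hε
    rwa [integral_add (integrable_sq.fun_sub integrable_comp) (integrable_hessian.const_mul ε),
      integral_sub integrable_sq integrable_comp, integral_const_mul] at hnonneg
  have hlim : Tendsto bound (𝓝[>] 0) (𝓝 (bound 0)) :=
    (continuous_const.add (continuous_id.mul continuous_const)).continuousWithinAt
  have hzero := ge_of_tendsto hlim (eventually_mem_nhdsWithin.mono hbound)
  simpa [bound] using hzero

end IsDefiningFunction

end Reilly

section Hessian

theorem fderiv_gradientWithin_eq_fderiv_gradient {E : Type*} [NormedAddCommGroup E]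
    [InnerProductSpace ℝ E] [CompleteSpace E] {u : E → ℝ} {s : Set E} {x : E} (hx : s ∈ 𝓝 x) :
    fderiv ℝ (gradientWithin u s) x = fderiv ℝ (∇ u) x := by
  refine EventuallyEq.fderiv_eq ?_
  filter_upwards [eventually_mem_nhds_iff.2 hx] with y hy
  rw [gradientWithin, gradient, fderivWithin_of_mem_nhds hy]

theorem uniqueDiffOn_closure_of_isOpen_of_convex {E : Type*} [NormedAddCommGroup E]
    [NormedSpace ℝ E] {s : Set E} (hso : IsOpen s) (hsc : Convex ℝ s) :
    UniqueDiffOn ℝ (closure s) := by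
  rcases s.eq_empty_or_nonempty with rfl | hne
  · simp only [closure_empty, uniqueDiffOn_empty]
  · exact uniqueDiffOn_convex hsc.closure (hne.mono (interior_maximal subset_closure hso))

/- At a boundary point where `u` has no two-sided derivative, `gradient u x` is the junk value `0`,
so that the classical Robin condition reads `β * u x = 0`. -/
theorem inner_gradientWithin_robin_or_eq_zero {E : Type*} [NormedAddCommGroup E]
    [InnerProductSpace ℝ E] [CompleteSpace E] {u : E → ℝ} {s : Set E} {x v : E} {β : ℝ}
    (hβ : β ≠ 0) (hs : UniqueDiffWithinAt ℝ s x) (hbc : ⟪∇ u x, v⟫ + β * u x = 0) :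
    ⟪gradientWithin u s x, v⟫ + β * u x = 0 ∨ u x = 0 := by
  by_cases hu : DifferentiableAt ℝ u x
  · left
    rwa [gradientWithin, hu.fderivWithin hs]
  · right
    simpa [gradient_eq_zero_of_not_differentiableAt hu, hβ] using hbc

theorem IsDefiningFunction.setIntegral_traceCLM_hessian_comp_le {E : Type*} [NormedAddCommGroup E]
    [InnerProductSpace ℝ E] [FiniteDimensional ℝ E] [MeasurableSpace E] [BorelSpace E]
    {μ : Measure E} [μ.IsAddHaarMeasure] {f u : E → ℝ} {Ω : Set E} {β : ℝ}
    (h : IsDefiningFunction f Ω) (hΩc : Convex ℝ Ω) (hΩ : Bornology.IsBounded Ω)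
    (hu : ContDiffOn ℝ 2 u (closure Ω)) (hβ : 0 ≤ β)
    (hbc : ∀ x ∈ frontier Ω,
      ⟪∇ f x, gradientWithin u (closure Ω) x⟫ + β * (‖∇ f x‖ * u x) = 0 ∨ u x = 0) :
    ∫ x in Ω, traceCLM (fderiv ℝ (∇ u) x ∘L fderiv ℝ (∇ u) x) ∂μ
      ≤ ∫ x in Ω, traceCLM (fderiv ℝ (∇ u) x) ^ 2 ∂μ := by
  have hΩu := uniqueDiffOn_closure_of_isOpen_of_convex h.isOpen hΩc
  have hU : ContDiffOn ℝ 1 (gradientWithin u (closure Ω)) (closure Ω) :=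
    contDiffOn_gradientWithin hΩu (by simpa [one_add_one_eq_two] using hu)
  have hle := h.setIntegral_traceCLM_comp_le (μ := μ) hΩ hΩu hU fun x hx =>
    h.reillyDensity_nonneg hΩc hx (hu.differentiableOn two_ne_zero)
      (hU.differentiableOn one_ne_zero) hβ hbc
  have hfderiv (x) (hx : x ∈ Ω) :=
    fderiv_gradientWithin_eq_fderiv_gradient (u := u)
      (mem_of_superset (h.isOpen.mem_nhds hx) subset_closure)
  rwa [setIntegral_congr_fun h.isOpen.measurableSet fun x hx =>
      congrArg (fun A => traceCLM (A ∘L A)) (hfderiv x hx),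
    setIntegral_congr_fun h.isOpen.measurableSet fun x hx =>
      congrArg (traceCLM · ^ 2) (hfderiv x hx)] at hle

end Hessian

section EuclideanSpace

variable {n : ℕ} {u : EuclideanSpace ℝ (Fin n) → ℝ} {Ω : Set (EuclideanSpace ℝ (Fin n))}
  {x : EuclideanSpace ℝ (Fin n)}

theorem fderiv_fderiv_apply_eq_inner_fderiv_gradient (hu : ContDiffAt ℝ 2 u x)
    (v w : EuclideanSpace ℝ (Fin n)) :
    fderiv ℝ (fun y => fderiv ℝ u y w) x v = ⟪w, fderiv ℝ (∇ u) x v⟫ := by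
  have hgrad : DifferentiableAt ℝ (∇ u) x :=
    (contDiffAt_gradient (n := 1) hu).differentiableAt one_ne_zero
  rw [inner_fderiv_apply_eq_fderiv_inner hgrad]
  simp [inner_gradient_right]

theorem lap_eq_traceCLM_fderiv_gradient (hu : ContDiffAt ℝ 2 u x) :
    lap u x = traceCLM (fderiv ℝ (∇ u) x) := by
  rw [traceCLM_eq_sum_inner (EuclideanSpace.basisFun (Fin n) ℝ)]
  simp only [EuclideanSpace.basisFun_apply, lap, fderiv_fderiv_apply_eq_inner_fderiv_gradient hu]

theorem hessSq_eq_traceCLM_comp (hu : ContDiffAt ℝ 2 u x) :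
    hessSq u x = traceCLM (fderiv ℝ (∇ u) x ∘L fderiv ℝ (∇ u) x) := by
  rw [traceCLM_comp_eq_sum_inner_mul_inner (EuclideanSpace.basisFun (Fin n) ℝ)]
  simp only [EuclideanSpace.basisFun_apply, hessSq, fderiv_fderiv_apply_eq_inner_fderiv_gradient hu]
  refine Finset.sum_congr rfl fun i _ => Finset.sum_congr rfl fun j _ => ?_
  rw [sq, real_inner_comm _ (EuclideanSpace.single j 1)]
  exact congrArg _ (isSymmetric_fderiv_gradient hu _ _).symm

theorem setIntegral_lap_sq_of_eigenfunction {η : ℝ} (hΩ : IsOpen Ω)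
    (heig : ∀ x ∈ Ω, lap u x + η * u x = 0) :
    ∫ x in Ω, lap u x ^ 2 = η ^ 2 * ∫ x in Ω, u x ^ 2 := by
  rw [← integral_const_mul]
  refine setIntegral_congr_fun hΩ.measurableSet fun x hx => ?_
  simp only [eq_neg_of_add_eq_zero_left (heig x hx)]
  ring

theorem steklov_stmt_14_general {f : EuclideanSpace ℝ (Fin n) → ℝ} (hf : IsDefiningFunction f Ω)
    (hΩconv : Convex ℝ Ω) (hΩbd : Bornology.IsBounded Ω)
    {ν : EuclideanSpace ℝ (Fin n) → EuclideanSpace ℝ (Fin n)}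
    (hν : ∀ x ∈ frontier Ω, ‖ν x‖ = 1 ∧ ∀ y ∈ Ω, ⟪ν x, y - x⟫ ≤ 0)
    (hu : ContDiffOn ℝ 2 u (closure Ω)) {β : ℝ} (hβ : 0 ≤ β)
    (hbc : ∀ x ∈ frontier Ω, ⟪gradientWithin u (closure Ω) x, ν x⟫ + β * u x = 0 ∨ u x = 0) :
    ∫ x in Ω, hessSq u x ≤ ∫ x in Ω, lap u x ^ 2 := by
  have hux (x) (hx : x ∈ Ω) : ContDiffAt ℝ 2 u x :=
    hu.contDiffAt (mem_of_superset (hf.isOpen.mem_nhds hx) subset_closure)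
  rw [setIntegral_congr_fun hf.isOpen.measurableSet fun x hx => hessSq_eq_traceCLM_comp (hux x hx),
    setIntegral_congr_fun hf.isOpen.measurableSet fun x hx =>
      congrArg (· ^ 2) (lap_eq_traceCLM_fderiv_gradient (hux x hx))]
  refine hf.setIntegral_traceCLM_hessian_comp_le hΩconv hΩbd hu hβ fun x hx =>
    (hbc x hx).imp_left fun hx_robin => ?_
  rw [← hf.norm_gradient_smul_eq_gradient hx (hν x hx).1 (hν x hx).2, norm_smul, (hν x hx).1,
    real_inner_smul_left, real_inner_comm]
  simp only [norm_norm]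
  linear_combination ‖∇ f x‖ * hx_robin

end EuclideanSpace

/-- **Robin case with positive parameter.** Let `Ω ⊂ ℝⁿ` be a bounded
smooth convex domain, `β > 0`, and `u` a Robin eigenfunction: `Δu + ηu = 0` in `Ω`,
`∂_ν u + βu = 0` on `∂Ω`, normalized with `∫_Ω u² = 1`. Then `∫_Ω |D²u|² ≤ η²`. -/
theorem steklov_stmt_14 {n : ℕ} (hn : 2 ≤ n) (Ω : Set (EuclideanSpace ℝ (Fin n)))
    (hΩopen : IsOpen Ω) (hΩconv : Convex ℝ Ω) (hΩbd : Bornology.IsBounded Ω)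
    (hΩne : Ω.Nonempty) (hΩsm : HasSmoothBoundary Ω)
    (ν : EuclideanSpace ℝ (Fin n) → EuclideanSpace ℝ (Fin n))
    (hν : ∀ x ∈ frontier Ω, ‖ν x‖ = 1 ∧ ∀ y ∈ Ω, ⟪ν x, y - x⟫ ≤ 0)
    (u : EuclideanSpace ℝ (Fin n) → ℝ) (η β : ℝ) (hβ : 0 < β)
    (hu : ContDiffOn ℝ 2 u (closure Ω))
    (heig : ∀ x ∈ Ω, lap u x + η * u x = 0)
    (hbc : ∀ x ∈ frontier Ω, ⟪gradient u x, ν x⟫ + β * u x = 0)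
    (hnorm : (∫ x in Ω, (u x) ^ 2) = 1) :
    (∫ x in Ω, hessSq u x) ≤ η ^ 2 := by
  obtain ⟨f, hf_smooth, hf_sublevel, hf_regular⟩ := hΩsm
  have hf : IsDefiningFunction f Ω := ⟨contDiff_infty.1 hf_smooth 2, hf_sublevel, hf_regular⟩
  have hΩu := uniqueDiffOn_closure_of_isOpen_of_convex hΩopen hΩconv
  calc ∫ x in Ω, hessSq u x
      ≤ ∫ x in Ω, lap u x ^ 2 :=
        steklov_stmt_14_general hf hΩconv hΩbd hν hu hβ.le fun x hx =>
          inner_gradientWithin_robin_or_eq_zero hβ.ne' (hΩu x hx.1) (hbc x hx)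
    _ = η ^ 2 * ∫ x in Ω, u x ^ 2 := setIntegral_lap_sq_of_eigenfunction hΩopen heig
    _ = η ^ 2 := by rw [hnorm, mul_one]
end
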